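/- arXiv:1705.03300 — 2 statements merged into one kernel-verified Lean document; each statement's English description precedes it below -/
import Mathlib

section
/- Let (A,G,α) be a C*-dynamical system with G discrete, A unital with faithful tracial state τ, α τ-preserving, and τ' = τ∘E. Let (F_i)_{i∈I} be a net of completely positive Herz-Schur (A,G,α)-multipliers such that each F_i(e) is unital and τ∘F_i(e) ≤ τ. Then ||S_{F_i}(x) − x||_{2,τ'} → 0 for all x ∈ A⋊_{α,r}G if and only if ||F_i(t)(a) − a||_{2,τ} → 0 for all t ∈ G and a ∈ A. -/
noncomputable section

open scoped ComplexOrder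
open Matrix
open scoped ENNReal

/-- Positivity of a matrix over a (possibly non-unital) C*-algebra:
`M` is positive iff it factors as `Nᴴ * N`. -/
def MatPos {R : Type*} [NonUnitalSemiring R] [StarRing R] {ν : Type*} [Fintype ν]
    (M : Matrix ν ν R) : Prop :=
  ∃ N : Matrix ν ν R, M = Nᴴ * N

/-- A linear map between C*-algebras is completely positive if all its matrix
amplifications preserve positivity. -/
def IsCompletelyPositive {R S : Type*} [NonUnitalSemiring R] [StarRing R] [Module ℂ R]
    [NonUnitalSemiring S] [StarRing S] [Module ℂ S] (Φ : R →ₗ[ℂ] S) : Prop :=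
  ∀ (n : ℕ) (M : Matrix (Fin n) (Fin n) R), MatPos M → MatPos (M.map Φ)

variable {H : Type*} [NormedAddCommGroup H] [InnerProductSpace ℂ H] [CompleteSpace H]

/-- The bounded operator on the Hilbert space `H ⊕₂ ⋯ ⊕₂ H` associated to an
operator-valued `n × n` matrix. -/
def matOp {ν : Type*} [Fintype ν] (M : Matrix ν ν (H →L[ℂ] H)) :
    PiLp 2 (fun _ : ν => H) →L[ℂ] PiLp 2 (fun _ : ν => H) :=
  ((PiLp.continuousLinearEquiv 2 ℂ (fun _ : ν => H)).symm :
      (∀ _ : ν, H) →L[ℂ] PiLp 2 (fun _ : ν => H)) ∘L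
    (ContinuousLinearMap.pi fun i =>
      (∑ j, (M i j) ∘L (ContinuousLinearMap.proj j)) ∘L
        ((PiLp.continuousLinearEquiv 2 ℂ (fun _ : ν => H)) :
          PiLp 2 (fun _ : ν => H) →L[ℂ] ∀ _ : ν, H))

variable {H : Type*} [NormedAddCommGroup H] [InnerProductSpace ℂ H] [CompleteSpace H]
variable {X : Type*}

/-- Evaluation at a point, as a continuous linear map `ℓ²(X,H) → H`. -/
def lpEval (x : X) : lp (fun _ : X => H) 2 →L[ℂ] H :=
  LinearMap.mkContinuous
    { toFun := fun f => f x
      map_add' := fun f g => by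
        have := lp.coeFn_add f g
        exact congrFun this x
      map_smul' := fun c f => by
        have := lp.coeFn_smul c f
        exact congrFun this x }
    1 (fun f => by
      simpa using lp.norm_apply_le_norm (by norm_num) f x)

/-- Inclusion of the `x`-th coordinate, as a continuous linear map `H → ℓ²(X,H)`. -/
def lpSingle (x : X) : H →L[ℂ] lp (fun _ : X => H) 2 := by
  classical
  exact LinearMap.mkContinuous
    { toFun := fun ξ => lp.single 2 x ξ
      map_add' := fun ξ η => by
        apply lp.ext
        funext j
        by_cases h : j = x
        · subst h; simp [lp.single_apply_self]
        · simp [lp.single_apply_ne _ _ _ h, lp.coeFn_add]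
      map_smul' := fun c ξ => by simp [lp.single_smul] }
    1 (fun ξ => by
      simpa using (lp.norm_single (p := 2) (by norm_num)
        (fun _ : X => ξ) x).le)

/-- The elementary operator `e_{x,y} ⊗ T` on `ℓ²(X,H)`. -/
def elemOp (x y : X) (T : H →L[ℂ] H) :
    lp (fun _ : X => H) 2 →L[ℂ] lp (fun _ : X => H) 2 :=
  (lpSingle x) ∘L T ∘L (lpEval y)

/-- The operator `T_k` on `ℓ²(X,H)` associated with a finitely supported kernel
`k : X × X → B(H)`; it is (defined to be) `0` if `k` is not finitely supported. -/
def TOp (k : X × X → (H →L[ℂ] H)) :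
    lp (fun _ : X => H) 2 →L[ℂ] lp (fun _ : X => H) 2 :=
  ∑ᶠ (p : X × X), elemOp p.1 p.2 (k p)

variable {G : Type*} [Group G]

/-- The left regular translation `λ_t` on `ℓ²(G,H)`. -/
def lam (t : G) : lp (fun _ : G => H) 2 →L[ℂ] lp (fun _ : G => H) 2 :=
  LinearMap.mkContinuous
    { toFun := fun f =>
        ⟨fun s => f (t⁻¹ * s), by
          apply memℓp_gen
          have hf : Summable fun s => ‖f s‖ ^ (2 : ℝ≥0∞).toReal :=
            (lp.memℓp f).summable (by norm_num)
          exact ((Equiv.mulLeft t⁻¹).summable_iff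
            (f := fun s => ‖f s‖ ^ (2 : ℝ≥0∞).toReal)).2 hf⟩
      map_add' := fun f g => by
        apply lp.ext; funext s
        exact congrFun (lp.coeFn_add f g) (t⁻¹ * s)
      map_smul' := fun c f => by
        apply lp.ext; funext s
        exact congrFun (lp.coeFn_smul c f) (t⁻¹ * s) }
    1 (fun f => by
      rw [one_mul]
      refine lp.norm_le_of_tsum_le (by norm_num) (norm_nonneg f) ?_
      have h1 : ∑' (s : G), ‖f (t⁻¹ * s)‖ ^ (2 : ℝ≥0∞).toReal
          = ∑' (s : G), ‖f s‖ ^ (2 : ℝ≥0∞).toReal :=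
        (Equiv.mulLeft t⁻¹).tsum_eq (fun s => ‖f s‖ ^ (2 : ℝ≥0∞).toReal)
      show ∑' (s : G), ‖f (t⁻¹ * s)‖ ^ (2 : ℝ≥0∞).toReal ≤ ‖f‖ ^ (2 : ℝ≥0∞).toReal
      rw [h1, ← lp.norm_rpow_eq_tsum (by norm_num) f])

/-- The diagonal ("block multiplication") operator on `ℓ²(X,H)` associated with a
uniformly bounded family of operators. -/
def diagOp (T : X → (H →L[ℂ] H)) (C : ℝ) (hC : ∀ x, ‖T x‖ ≤ C) :
    lp (fun _ : X => H) 2 →L[ℂ] lp (fun _ : X => H) 2 := by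
  have hC' : ∀ x, ‖T x‖ ≤ max C 0 := fun x => (hC x).trans (le_max_left _ _)
  have hr : (0:ℝ) < (2 : ℝ≥0∞).toReal := by norm_num
  have key : ∀ (f : lp (fun _ : X => H) 2) (x : X),
      ‖T x (f x)‖ ^ (2 : ℝ≥0∞).toReal
        ≤ (max C 0) ^ (2 : ℝ≥0∞).toReal * ‖f x‖ ^ (2 : ℝ≥0∞).toReal := by
    intro f x
    have h1 : ‖T x (f x)‖ ≤ max C 0 * ‖f x‖ :=
      ((T x).le_opNorm (f x)).trans
        (mul_le_mul_of_nonneg_right (hC' x) (norm_nonneg _))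
    calc ‖T x (f x)‖ ^ (2 : ℝ≥0∞).toReal
        ≤ (max C 0 * ‖f x‖) ^ (2 : ℝ≥0∞).toReal :=
          Real.rpow_le_rpow (norm_nonneg _) h1 hr.le
      _ = (max C 0) ^ (2 : ℝ≥0∞).toReal * ‖f x‖ ^ (2 : ℝ≥0∞).toReal :=
          Real.mul_rpow (le_max_right _ _) (norm_nonneg _)
  have mem : ∀ f : lp (fun _ : X => H) 2, Memℓp (fun x => T x (f x)) 2 := by
    intro f
    apply memℓp_gen
    exact Summable.of_nonneg_of_le
      (fun x => Real.rpow_nonneg (norm_nonneg _) _) (key f)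
      (((lp.memℓp f).summable hr).mul_left _)
  exact LinearMap.mkContinuous
    { toFun := fun f => ⟨fun x => T x (f x), mem f⟩
      map_add' := fun f g => by
        apply lp.ext; funext x
        have := congrFun (lp.coeFn_add f g) x
        show T x ((f + g) x) = _
        rw [this]
        exact map_add (T x) (f x) (g x)
      map_smul' := fun c f => by
        apply lp.ext; funext x
        have := congrFun (lp.coeFn_smul c f) x
        show T x ((c • f) x) = _
        rw [this]
        simp [lp.coeFn_smul] }
    (max C 0) (fun f => by
      refine lp.norm_le_of_tsum_le hr (by positivity) ?_
      show ∑' (x : X), ‖T x (f x)‖ ^ (2 : ℝ≥0∞).toReal ≤ _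
      calc ∑' (x : X), ‖T x (f x)‖ ^ (2 : ℝ≥0∞).toReal
          ≤ ∑' (x : X), (max C 0) ^ (2 : ℝ≥0∞).toReal * ‖f x‖ ^ (2 : ℝ≥0∞).toReal :=
            Summable.tsum_le_tsum (key f)
              (Summable.of_nonneg_of_le
                (fun x => Real.rpow_nonneg (norm_nonneg _) _) (key f)
                (((lp.memℓp f).summable hr).mul_left _))
              (((lp.memℓp f).summable hr).mul_left _)
        _ = (max C 0) ^ (2 : ℝ≥0∞).toReal * ∑' (x : X), ‖f x‖ ^ (2 : ℝ≥0∞).toReal :=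
            tsum_mul_left
        _ = (max C 0) ^ (2 : ℝ≥0∞).toReal * ‖f‖ ^ (2 : ℝ≥0∞).toReal := by
            rw [lp.norm_rpow_eq_tsum hr]
        _ = (max C 0 * ‖f‖) ^ (2 : ℝ≥0∞).toReal :=
            (Real.mul_rpow (by positivity) (norm_nonneg _)).symm)

section CB

variable {A' B' : Type*} [AddCommMonoid A'] [Module ℂ A'] [AddCommMonoid B'] [Module ℂ B']
variable {K : Type*} [NormedAddCommGroup K] [InnerProductSpace ℂ K] [CompleteSpace K]

/-- All matrix amplifications of `Φ` are bounded by `C`, where matrices over the abstract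
spaces are normed through the given embeddings into concrete operator algebras. -/
def CBBound (ιA : A' → (H →L[ℂ] H)) (ιB : B' → (K →L[ℂ] K))
    (Φ : A' →ₗ[ℂ] B') (C : ℝ) : Prop :=
  ∀ (n : ℕ) (M : Matrix (Fin n) (Fin n) A'),
    ‖matOp (M.map (fun a => ιB (Φ a)))‖ ≤ C * ‖matOp (M.map ιA)‖

/-- Complete boundedness of a linear map, relative to embeddings of its domain and
codomain into concrete operator algebras. -/
def IsCB (ιA : A' → (H →L[ℂ] H)) (ιB : B' → (K →L[ℂ] K)) (Φ : A' →ₗ[ℂ] B') : Prop :=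
  ∃ C : ℝ, 0 ≤ C ∧ CBBound ιA ιB Φ C

/-- The completely bounded norm of a linear map, relative to embeddings of its domain
and codomain into concrete operator algebras. -/
def cbNorm (ιA : A' → (H →L[ℂ] H)) (ιB : B' → (K →L[ℂ] K)) (Φ : A' →ₗ[ℂ] B') : ℝ :=
  sInf { C : ℝ | 0 ≤ C ∧ CBBound ιA ιB Φ C }

end CB

section Schur

variable {A : Type*} [NonUnitalCStarAlgebra A]

/-- A *-representation is non-degenerate if the span of the vectors in its range is dense. -/
def NondegenerateRep {K : Type*} [NormedAddCommGroup K] [InnerProductSpace ℂ K]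
    [CompleteSpace K] (ρ : A →⋆ₙₐ[ℂ] (K →L[ℂ] K)) : Prop :=
  Dense (Submodule.span ℂ {ξ : K | ∃ (a : A) (v : K), ρ a v = ξ} : Set K)

/-- A function `φ : X × X → CB(A, B(H))` is of positive type if it maps positive
matrices to positive matrices, entrywise. -/
def PositiveType (φ : X → X → (A →ₗ[ℂ] (H →L[ℂ] H))) : Prop :=
  ∀ (m : ℕ) (x : Fin m → X) (a : Matrix (Fin m) (Fin m) A),
    MatPos a → MatPos (Matrix.of fun p q => φ (x p) (x q) (a p q))

/-- A kernel `k : X × X → A` is positive definite if all the matrices obtained by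
sampling it at finitely many points are positive. -/
def PosDefKernel (k : X × X → A) : Prop :=
  ∀ (n : ℕ) (x : Fin n → X), MatPos (Matrix.of fun i j => k (x i, x j))

/-- The operator `T_k` on `ℓ²(X,H)` of a kernel `k : X × X → A`, via the embedding
`ι : A → B(H)` (it is `0` unless `k` is finitely supported). -/
def TKer (ι : A →⋆ₙₐ[ℂ] (H →L[ℂ] H)) (k : X × X → A) :
    lp (fun _ : X => H) 2 →L[ℂ] lp (fun _ : X => H) 2 :=
  TOp (fun p => ι (k p))

/-- `C` is a complete bound for the Schur multiplication map `S_φ : T_k ↦ T_{φ·k}`,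
tested on (matrices of) finitely supported kernels, which span a dense subspace of
`K(ℓ²(X)) ⊗ A`. -/
def SchurBound (ι : A →⋆ₙₐ[ℂ] (H →L[ℂ] H)) (φ : X → X → (A →ₗ[ℂ] (H →L[ℂ] H)))
    (C : ℝ) : Prop :=
  ∀ (n : ℕ) (k : Fin n → Fin n → (X × X → A)),
    (∀ i j, (Function.support (k i j)).Finite) →
    ‖matOp (Matrix.of fun i j => TOp (fun p => φ p.1 p.2 (k i j p)))‖
      ≤ C * ‖matOp (Matrix.of fun i j => TKer ι (k i j))‖

/-- `φ` is a Schur `A`-multiplier: the map `S_φ : T_k ↦ T_{φ·k}` is completely bounded. -/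
def IsSchurMultiplier (ι : A →⋆ₙₐ[ℂ] (H →L[ℂ] H))
    (φ : X → X → (A →ₗ[ℂ] (H →L[ℂ] H))) : Prop :=
  ∃ C : ℝ, 0 ≤ C ∧ SchurBound ι φ C

/-- The multiplier norm `‖φ‖_m = ‖S_φ‖_cb` of a Schur `A`-multiplier. -/
def schurNorm (ι : A →⋆ₙₐ[ℂ] (H →L[ℂ] H))
    (φ : X → X → (A →ₗ[ℂ] (H →L[ℂ] H))) : ℝ :=
  sInf { C : ℝ | 0 ≤ C ∧ SchurBound ι φ C }

/-- Complete positivity of the map `S_φ : K(ℓ²(X)) ⊗ A → K(ℓ²(X)) ⊗ B(H)`, tested on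
(matrices of) finitely supported kernels. -/
def SchurCP (ι : A →⋆ₙₐ[ℂ] (H →L[ℂ] H)) (φ : X → X → (A →ₗ[ℂ] (H →L[ℂ] H))) : Prop :=
  ∀ (n : ℕ) (k : Fin n → Fin n → (X × X → A)),
    (∀ i j, (Function.support (k i j)).Finite) →
    MatPos (Matrix.of fun i j => TKer ι (k i j)) →
    MatPos (Matrix.of fun i j => TOp (fun p => φ p.1 p.2 (k i j p)))

end Schur

section Dynamics

variable {A : Type*} [NonUnitalCStarAlgebra A]

/-- `α` is an action of the group `G` on `A` by *-automorphisms. -/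
def IsAction (α : G → A ≃⋆ₐ[ℂ] A) : Prop :=
  (∀ a, α 1 a = a) ∧ ∀ s t : G, ∀ a : A, α (s * t) a = α s (α t a)

/-- A *-automorphism of `A`, as a `ℂ`-linear map. -/
def autLin (e : A ≃⋆ₐ[ℂ] A) : A →ₗ[ℂ] A :=
  { toFun := e
    map_add' := fun a b => map_add e a b
    map_smul' := fun c a => map_smul e c a }

/-- The representation `π` of `A` on `ℓ²(G,H)`: `(π(a)ξ)(s) = α_{s⁻¹}(a)(ξ(s))`. -/
def piRep (ι : A →⋆ₙₐ[ℂ] (H →L[ℂ] H)) (α : G → A ≃⋆ₐ[ℂ] A) (a : A) :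
    lp (fun _ : G => H) 2 →L[ℂ] lp (fun _ : G => H) 2 :=
  diagOp (fun s => ι (α s⁻¹ a)) ‖a‖ (fun s =>
    (NonUnitalStarAlgHom.norm_apply_le ι (α s⁻¹ a)).trans_eq
      (StarAlgEquiv.norm_map (α s⁻¹) a))

/-- The reduced crossed product `A ⋊_{α,r} G`, realised concretely on `ℓ²(G,H)` as the
norm closure of the linear span of the operators `π(a)λ_t`. -/
def CrossedSet (ι : A →⋆ₙₐ[ℂ] (H →L[ℂ] H)) (α : G → A ≃⋆ₐ[ℂ] A) :
    Set (lp (fun _ : G => H) 2 →L[ℂ] lp (fun _ : G => H) 2) :=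
  closure (Submodule.span ℂ
    {x | ∃ (a : A) (t : G), x = piRep ι α a * lam t} : Set _)

/-- `E` is the canonical conditional expectation of the reduced crossed product onto `A`:
it is characterised by `ι (E x) = (x)_{e,e}`, the `(e,e)` matrix entry of `x`. -/
def IsCondExp (ι : A →⋆ₙₐ[ℂ] (H →L[ℂ] H)) (α : G → A ≃⋆ₐ[ℂ] A)
    (E : (lp (fun _ : G => H) 2 →L[ℂ] lp (fun _ : G => H) 2) →ₗ[ℂ] A) : Prop :=
  ∀ x ∈ CrossedSet ι α, ι (E x) = (lpEval (1 : G)) ∘L x ∘L (lpSingle (1 : G))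

/-- The defining property of the map `S_F` associated with `F : G → CB(A)`:
`S_F(π(a)λ_s) = π(F(s)(a))λ_s`. -/
def HSGenProp (ι : A →⋆ₙₐ[ℂ] (H →L[ℂ] H)) (α : G → A ≃⋆ₐ[ℂ] A)
    (F : G → (A →ₗ[ℂ] A))
    (Φ : (lp (fun _ : G => H) 2 →L[ℂ] lp (fun _ : G => H) 2) →ₗ[ℂ]
         (lp (fun _ : G => H) 2 →L[ℂ] lp (fun _ : G => H) 2)) : Prop :=
  ∀ (a : A) (s : G), Φ (piRep ι α a * lam s) = piRep ι α (F s a) * lam s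

/-- `Φ` maps the reduced crossed product into itself and, on matrices over the reduced
crossed product, all amplifications of `Φ` are bounded by `C`. -/
def CBBoundOnCrossed (ι : A →⋆ₙₐ[ℂ] (H →L[ℂ] H)) (α : G → A ≃⋆ₐ[ℂ] A)
    (Φ : (lp (fun _ : G => H) 2 →L[ℂ] lp (fun _ : G => H) 2) →ₗ[ℂ]
         (lp (fun _ : G => H) 2 →L[ℂ] lp (fun _ : G => H) 2)) (C : ℝ) : Prop :=
  ∀ (n : ℕ) (M : Matrix (Fin n) (Fin n)
      (lp (fun _ : G => H) 2 →L[ℂ] lp (fun _ : G => H) 2)),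
    (∀ i j, M i j ∈ CrossedSet ι α) →
      ‖matOp (M.map Φ)‖ ≤ C * ‖matOp M‖

/-- `Φ` is completely positive on the reduced crossed product: matrices over the crossed
product which are positive are mapped to positive matrices. -/
def CPOnCrossed (ι : A →⋆ₙₐ[ℂ] (H →L[ℂ] H)) (α : G → A ≃⋆ₐ[ℂ] A)
    (Φ : (lp (fun _ : G => H) 2 →L[ℂ] lp (fun _ : G => H) 2) →ₗ[ℂ]
         (lp (fun _ : G => H) 2 →L[ℂ] lp (fun _ : G => H) 2)) : Prop :=
  (∀ x ∈ CrossedSet ι α, Φ x ∈ CrossedSet ι α) ∧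
  ∀ (n : ℕ) (M : Matrix (Fin n) (Fin n)
      (lp (fun _ : G => H) 2 →L[ℂ] lp (fun _ : G => H) 2)),
    (∀ i j, M i j ∈ CrossedSet ι α) → MatPos M → MatPos (M.map Φ)

/-- `F : G → CB(A)` is a Herz-Schur `(A,G,α)`-multiplier: the map `S_F` determined by
`S_F(π(a)λ_s) = π(F(s)(a))λ_s` extends to a completely bounded map on `A ⋊_{α,r} G`. -/
def IsHerzSchurMultiplier (ι : A →⋆ₙₐ[ℂ] (H →L[ℂ] H)) (α : G → A ≃⋆ₐ[ℂ] A)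
    (F : G → (A →ₗ[ℂ] A)) : Prop :=
  ∃ Φ, HSGenProp ι α F Φ ∧ (∀ x ∈ CrossedSet ι α, Φ x ∈ CrossedSet ι α) ∧
    ∃ C : ℝ, 0 ≤ C ∧ CBBoundOnCrossed ι α Φ C

/-- `F : G → CB(A)` is a completely positive Herz-Schur `(A,G,α)`-multiplier: the map
`S_F` extends to a completely positive (hence completely bounded) map on `A ⋊_{α,r} G`. -/
def IsHerzSchurMultiplierCP (ι : A →⋆ₙₐ[ℂ] (H →L[ℂ] H)) (α : G → A ≃⋆ₐ[ℂ] A)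
    (F : G → (A →ₗ[ℂ] A)) : Prop :=
  ∃ Φ, HSGenProp ι α F Φ ∧ CPOnCrossed ι α Φ ∧
    ∃ C : ℝ, 0 ≤ C ∧ CBBoundOnCrossed ι α Φ C

/-- The function `N(F) : G × G → CB(A)`, `N(F)(s,t)(a) = α_{s⁻¹}(F(st⁻¹)(α_s(a)))`. -/
def NF (α : G → A ≃⋆ₐ[ℂ] A) (F : G → (A →ₗ[ℂ] A)) : G → G → (A →ₗ[ℂ] A) :=
  fun s t => (autLin (α s⁻¹)) ∘ₗ (F (s * t⁻¹)) ∘ₗ (autLin (α s))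

end Dynamics

section Trace

variable {A : Type*} [NonUnitalCStarAlgebra A]

/-- `τ` is a positive linear functional. -/
def IsPositiveFunctional (τ : A →ₗ[ℂ] ℂ) : Prop :=
  ∀ a : A, 0 ≤ τ (star a * a)

/-- `τ` is tracial. -/
def IsTracial (τ : A →ₗ[ℂ] ℂ) : Prop :=
  ∀ a b : A, τ (a * b) = τ (b * a)

/-- `τ` is faithful. -/
def IsFaithfulFunctional (τ : A →ₗ[ℂ] ℂ) : Prop :=
  ∀ a : A, τ (star a * a) = 0 → a = 0

/-- The `L²`-norm `‖a‖_{2,τ} = τ(a*a)^{1/2}` associated with a positive functional `τ`. -/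
def l2norm (τ : A →ₗ[ℂ] ℂ) (a : A) : ℝ :=
  Real.sqrt (τ (star a * a)).re

/-- A map `Φ : A → A` is `L²`-bounded by `C` with respect to `τ`. -/
def L2BoundedBy (τ : A →ₗ[ℂ] ℂ) (Φ : A →ₗ[ℂ] A) (C : ℝ) : Prop :=
  ∀ a : A, l2norm τ (Φ a) ≤ C * l2norm τ a

/-- A map `Φ : A → A` is `L²`-bounded with respect to `τ`, i.e. it extends to a bounded
operator `T_Φ` on `L²(A,τ)`. -/
def L2Bounded (τ : A →ₗ[ℂ] ℂ) (Φ : A →ₗ[ℂ] A) : Prop :=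
  ∃ C : ℝ, 0 ≤ C ∧ L2BoundedBy τ Φ C

/-- The norm of the extension `T_Φ` of `Φ` to `L²(A,τ)`. -/
def l2OpNorm (τ : A →ₗ[ℂ] ℂ) (Φ : A →ₗ[ℂ] A) : ℝ :=
  sInf { C : ℝ | 0 ≤ C ∧ L2BoundedBy τ Φ C }

/-- `Φ` is `L²`-compact with respect to `τ`: the image under `Φ` of the `L²`-unit ball of
`A` is totally bounded in the `L²`-norm; equivalently, the extension `T_Φ` of `Φ` to
`L²(A,τ)` is a compact operator. -/
def L2Compact (τ : A →ₗ[ℂ] ℂ) (Φ : A →ₗ[ℂ] A) : Prop :=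
  ∀ ε : ℝ, 0 < ε → ∃ S : Finset A, ∀ a : A, l2norm τ a ≤ 1 →
    ∃ b ∈ S, l2norm τ (Φ a - b) < ε

end Trace

section Props

variable {A : Type*} [CStarAlgebra A]

/-- The pair `(A,τ)` has the C*-algebra Haagerup property (Definition 3.1, Dong). -/
def CStarHaagerup (τ : A →ₗ[ℂ] ℂ) : Prop :=
  ∃ (I : Type) (_ : Nonempty I) (_ : SemilatticeSup I) (Φ : I → (A →ₗ[ℂ] A)),
    (∀ i, Φ i 1 = 1) ∧
    (∀ i, IsCompletelyPositive (Φ i)) ∧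
    (∀ i (a : A), τ (Φ i (star a * a)) ≤ τ (star a * a)) ∧
    (∀ i, L2Compact τ (Φ i)) ∧
    (∀ a : A, Filter.Tendsto (fun i => l2norm τ (Φ i a - a)) Filter.atTop (nhds 0))

/-- `A` is a nuclear C*-algebra: there is a net of finite-rank completely positive
contractions converging to the identity in the point-norm topology. -/
def NuclearCStarAlgebra (A : Type*) [NonUnitalCStarAlgebra A] : Prop :=
  ∃ (I : Type) (_ : Nonempty I) (_ : SemilatticeSup I) (Φ : I → (A →ₗ[ℂ] A)),
    (∀ i, IsCompletelyPositive (Φ i)) ∧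
    (∀ i (a : A), ‖Φ i a‖ ≤ ‖a‖) ∧
    (∀ i, FiniteDimensional ℂ (LinearMap.range (Φ i))) ∧
    (∀ a : A, Filter.Tendsto (fun i => ‖Φ i a - a‖) Filter.atTop (nhds 0))

/-- A discrete group `G` has the Haagerup property: there is a net of normalised
positive-definite functions on `G`, vanishing at infinity, converging pointwise to `1`. -/
def GroupHaagerup (G : Type*) [Group G] : Prop :=
  ∃ (I : Type) (_ : Nonempty I) (_ : SemilatticeSup I) (φ : I → G → ℂ),
    (∀ i, φ i 1 = 1) ∧
    (∀ i (n : ℕ) (s : Fin n → G) (μ : Fin n → ℂ),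
      0 ≤ ∑ k, ∑ l, (starRingEnd ℂ) (μ k) * φ i ((s k)⁻¹ * s l) * μ l) ∧
    (∀ i, ∀ ε : ℝ, 0 < ε → ∃ S : Finset G, ∀ s ∉ S, ‖φ i s‖ ≤ ε) ∧
    (∀ s : G, Filter.Tendsto (fun i => φ i s) Filter.atTop (nhds 1))

end Props

section More

variable {A : Type*} [NonUnitalCStarAlgebra A]

/-- A star homomorphism, as a `ℂ`-linear map. -/
def iotaLin {B : Type*} [NonUnitalCStarAlgebra B] (ι : A →⋆ₙₐ[ℂ] B) : A →ₗ[ℂ] B :=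
  { toFun := ι
    map_add' := fun a b => map_add ι a b
    map_smul' := fun c a => map_smul ι c a }

/-- A function `φ : X × X → CB(A)` with values in the maps on `A` is of positive type. -/
def PositiveTypeA (φ : X → X → (A →ₗ[ℂ] A)) : Prop :=
  ∀ (m : ℕ) (x : Fin m → X) (a : Matrix (Fin m) (Fin m) A),
    MatPos a → MatPos (Matrix.of fun p q => φ (x p) (x q) (a p q))

/-- The representation `π` of `A` on `ℓ²(G,H)`, as a linear map. -/
def piRepLin (ι : A →⋆ₙₐ[ℂ] (H →L[ℂ] H)) (α : G → A ≃⋆ₐ[ℂ] A) :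
    A →ₗ[ℂ] (lp (fun _ : G => H) 2 →L[ℂ] lp (fun _ : G => H) 2) :=
  { toFun := piRep ι α
    map_add' := fun a b => by
      apply ContinuousLinearMap.ext; intro f
      apply lp.ext; funext s
      have h1 : (((piRep ι α a + piRep ι α b) f :
          lp (fun _ : G => H) 2) : ∀ _ : G, H) s
          = ((piRep ι α a f : ∀ _ : G, H) s) + ((piRep ι α b f : ∀ _ : G, H) s) := by
        rw [ContinuousLinearMap.add_apply]
        exact congrFun (lp.coeFn_add (piRep ι α a f) (piRep ι α b f)) s
      show ι (α s⁻¹ (a + b)) (f s) = _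
      rw [h1]
      show _ = ι (α s⁻¹ a) (f s) + ι (α s⁻¹ b) (f s)
      rw [map_add (α s⁻¹), map_add ι, ContinuousLinearMap.add_apply]
    map_smul' := fun c a => by
      apply ContinuousLinearMap.ext; intro f
      apply lp.ext; funext s
      have h1 : (((c • piRep ι α a) f :
          lp (fun _ : G => H) 2) : ∀ _ : G, H) s
          = c • ((piRep ι α a f : ∀ _ : G, H) s) := by
        rw [ContinuousLinearMap.smul_apply]
        exact congrFun (lp.coeFn_smul c (piRep ι α a f)) s
      show ι (α s⁻¹ (c • a)) (f s) = _
      rw [RingHom.id_apply, h1]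
      show _ = c • ι (α s⁻¹ a) (f s)
      rw [map_smul (α s⁻¹), map_smul ι, ContinuousLinearMap.smul_apply] }

/-- The completely bounded norm of a map defined on the reduced crossed product. -/
def cbNormOnCrossed (ι : A →⋆ₙₐ[ℂ] (H →L[ℂ] H)) (α : G → A ≃⋆ₐ[ℂ] A)
    (Φ : (lp (fun _ : G => H) 2 →L[ℂ] lp (fun _ : G => H) 2) →ₗ[ℂ]
         (lp (fun _ : G => H) 2 →L[ℂ] lp (fun _ : G => H) 2)) : ℝ :=
  sInf { C : ℝ | 0 ≤ C ∧ CBBoundOnCrossed ι α Φ C }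

/-- The `L²`-norm `‖x‖_{2,τ'}` on the reduced crossed product induced by the trace
`τ' = τ ∘ E`. -/
def l2normCr (τ : A →ₗ[ℂ] ℂ)
    (E : (lp (fun _ : G => H) 2 →L[ℂ] lp (fun _ : G => H) 2) →ₗ[ℂ] A)
    (x : lp (fun _ : G => H) 2 →L[ℂ] lp (fun _ : G => H) 2) : ℝ :=
  Real.sqrt (τ (E (star x * x))).re

/-- The map `h_Φ : G → CB(A)` associated with a map `Φ` on the reduced crossed product:
`h_Φ(s)(a) = E(Φ(π(a)λ_s)λ_s*)`. -/
def hMap (ι : A →⋆ₙₐ[ℂ] (H →L[ℂ] H)) (α : G → A ≃⋆ₐ[ℂ] A)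
    (E : (lp (fun _ : G => H) 2 →L[ℂ] lp (fun _ : G => H) 2) →ₗ[ℂ] A)
    (Φ : (lp (fun _ : G => H) 2 →L[ℂ] lp (fun _ : G => H) 2) →ₗ[ℂ]
         (lp (fun _ : G => H) 2 →L[ℂ] lp (fun _ : G => H) 2))
    (s : G) : A →ₗ[ℂ] A :=
  E ∘ₗ (LinearMap.mulRight ℂ (star (lam s))) ∘ₗ Φ ∘ₗ
    (LinearMap.mulRight ℂ (lam (H := H) s)) ∘ₗ piRepLin ι α

end More

section BigProps

open Filter

variable {A : Type*} [CStarAlgebra A]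

/-- The Haagerup property for the `C*`-dynamical system `(A,G,α,τ)` (Definition 3.3). -/
def DynHaagerup (ι : A →⋆ₙₐ[ℂ] (H →L[ℂ] H)) (α : G → A ≃⋆ₐ[ℂ] A)
    (τ : A →ₗ[ℂ] ℂ) : Prop :=
  ∃ (I : Type) (_ : Nonempty I) (_ : SemilatticeSup I) (F : I → G → (A →ₗ[ℂ] A)),
    (∀ i, IsHerzSchurMultiplierCP ι α (F i)) ∧
    (∀ i, F i 1 1 = 1) ∧
    (∀ i (a : A), τ (F i 1 (star a * a)) ≤ τ (star a * a)) ∧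
    (∀ i (t : G), L2Compact τ (F i t)) ∧
    (∀ i, ∀ ε : ℝ, 0 < ε → ∃ S : Finset G, ∀ s ∉ S, l2OpNorm τ (F i s) ≤ ε) ∧
    (∀ (t : G) (a : A),
      Tendsto (fun i => l2norm τ (F i t a - a)) atTop (nhds 0))

/-- The C*-algebra Haagerup property for the reduced crossed product `A ⋊_{α,r} G`
endowed with the induced trace `τ' = τ ∘ E` (Definition 3.1). -/
def CrossedCStarHaagerup (ι : A →⋆ₙₐ[ℂ] (H →L[ℂ] H)) (α : G → A ≃⋆ₐ[ℂ] A)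
    (τ : A →ₗ[ℂ] ℂ)
    (E : (lp (fun _ : G => H) 2 →L[ℂ] lp (fun _ : G => H) 2) →ₗ[ℂ] A) : Prop :=
  ∃ (I : Type) (_ : Nonempty I) (_ : SemilatticeSup I)
    (Φ : I → ((lp (fun _ : G => H) 2 →L[ℂ] lp (fun _ : G => H) 2) →ₗ[ℂ]
              (lp (fun _ : G => H) 2 →L[ℂ] lp (fun _ : G => H) 2))),
    (∀ i, Φ i 1 = 1) ∧
    (∀ i, CPOnCrossed ι α (Φ i)) ∧
    (∀ i, ∀ x ∈ CrossedSet ι α, τ (E (Φ i (star x * x))) ≤ τ (E (star x * x))) ∧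
    (∀ i, ∀ ε : ℝ, 0 < ε →
      ∃ S : Finset (lp (fun _ : G => H) 2 →L[ℂ] lp (fun _ : G => H) 2),
        ∀ x ∈ CrossedSet ι α, l2normCr τ E x ≤ 1 →
          ∃ b ∈ S, l2normCr τ E (Φ i x - b) < ε) ∧
    (∀ x ∈ CrossedSet ι α,
      Tendsto (fun i => l2normCr τ E (Φ i x - x)) atTop (nhds 0))

end BigProps

section Nuc

open Filter

variable {A : Type*} [NonUnitalCStarAlgebra A]

/-- Nuclearity of the reduced crossed product `A ⋊_{α,r} G`: there is a net of
finite-rank completely positive contractions on it converging to the identity in the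
point-norm topology. -/
def CrossedNuclear (ι : A →⋆ₙₐ[ℂ] (H →L[ℂ] H)) (α : G → A ≃⋆ₐ[ℂ] A) : Prop :=
  ∃ (I : Type) (_ : Nonempty I) (_ : SemilatticeSup I)
    (Φ : I → ((lp (fun _ : G => H) 2 →L[ℂ] lp (fun _ : G => H) 2) →ₗ[ℂ]
              (lp (fun _ : G => H) 2 →L[ℂ] lp (fun _ : G => H) 2))),
    (∀ i, CPOnCrossed ι α (Φ i)) ∧
    (∀ i, ∀ x ∈ CrossedSet ι α, ‖Φ i x‖ ≤ ‖x‖) ∧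
    (∀ i, FiniteDimensional ℂ
      (Submodule.span ℂ ((fun x => Φ i x) '' CrossedSet ι α))) ∧
    (∀ x ∈ CrossedSet ι α, Tendsto (fun i => ‖Φ i x - x‖) atTop (nhds 0))

/-- Nuclearity of the `C*`-dynamical system `(A,G,α)` (Definition 4.2): a net of
completely positive, finitely supported Herz-Schur multipliers, with `‖F_i(e)‖_cb ≤ 1`,
with finite-rank values, converging to the identity pointwise in norm. -/
def DynNuclear (ι : A →⋆ₙₐ[ℂ] (H →L[ℂ] H)) (α : G → A ≃⋆ₐ[ℂ] A) : Prop :=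
  ∃ (I : Type) (_ : Nonempty I) (_ : SemilatticeSup I) (F : I → G → (A →ₗ[ℂ] A)),
    (∀ i, IsHerzSchurMultiplierCP ι α (F i)) ∧
    (∀ i, (Function.support (F i)).Finite) ∧
    (∀ i, CBBound (fun a => ι a) (fun a => ι a) (F i 1) 1) ∧
    (∀ i (s : G), FiniteDimensional ℂ (LinearMap.range (F i s))) ∧
    (∀ (s : G) (a : A), Tendsto (fun i => ‖F i s a - a‖) atTop (nhds 0))

end Nuc

section Amen

open Filter

variable {A : Type*} [CStarAlgebra A]

/-- Amenability of the action `α` of a discrete group `G` on a unital C*-algebra `A`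
(Definition 4.5): a net of finitely supported functions `T_i : G → Z(A)⁺` with
`Σ_s T_i(s)² = 1` and `‖Σ_s (T_i(s) - α_t(T_i(t⁻¹s)))*(T_i(s) - α_t(T_i(t⁻¹s)))‖ → 0`. -/
def AmenableAction {G : Type*} [Group G] (α : G → A ≃⋆ₐ[ℂ] A) : Prop :=
  ∃ (I : Type) (_ : Nonempty I) (_ : SemilatticeSup I) (T : I → G → A),
    (∀ i, (Function.support (T i)).Finite) ∧
    (∀ i (s : G) (c : A), Commute (T i s) c) ∧
    (∀ i (s : G), ∃ b : A, T i s = star b * b) ∧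
    (∀ i, ∑ᶠ s : G, T i s * T i s = 1) ∧
    (∀ t : G, Tendsto (fun i =>
        ‖∑ᶠ s : G, star (T i s - α t (T i (t⁻¹ * s))) *
          (T i s - α t (T i (t⁻¹ * s)))‖) atTop (nhds 0))

end Amen

universe u v w

/-- Data for a Stinespring-type representation of an operator-valued function on
`X × X`: a Hilbert space `K`, a *-representation `ρ : A → B(K)` and
families of operators `V, W : X → B(H,K)`. -/
structure OpValuedRep (A : Type u) [NonUnitalCStarAlgebra A]
    (H : Type v) [NormedAddCommGroup H] [InnerProductSpace ℂ H] [CompleteSpace H]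
    (X : Type w) where
  /-- the Hilbert space of the representation -/
  K : Type (max u v w)
  [nacg : NormedAddCommGroup K]
  [ips : InnerProductSpace ℂ K]
  [cpl : CompleteSpace K]
  /-- the representation -/
  ρ : A →⋆ₙₐ[ℂ] (K →L[ℂ] K)
  /-- the left family of operators -/
  V : X → (H →L[ℂ] K)
  /-- the right family of operators -/
  W : X → (H →L[ℂ] K)

attribute [instance] OpValuedRep.nacg OpValuedRep.ips OpValuedRep.cpl

end
noncomputable section
open scoped ComplexOrder ENNReal
open Matrix
open Filter

section Helpers

lemma aux_contr {B : Type*} [CStarAlgebra B] [PartialOrder B] [StarOrderedRing B]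
    (C : Set B) (Φ : B →ₗ[ℂ] B) (h1 : (1 : B) ∈ C)
    (hmul : ∀ x ∈ C, ∀ y ∈ C, x * y ∈ C) (hstar : ∀ x ∈ C, star x ∈ C)
    (hsub : ∀ x ∈ C, ∀ y ∈ C, x - y ∈ C) (hsmul : ∀ (c : ℂ), ∀ x ∈ C, c • x ∈ C)
    (hΦ1 : Φ 1 = 1)
    (hcp : ∀ (n : ℕ) (M : Matrix (Fin n) (Fin n) B),
      (∀ i j, M i j ∈ C) → MatPos M → MatPos (M.map Φ))
    (z : B) (hz : z ∈ C) : ‖Φ z‖ ≤ ‖z‖ := by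
  have hzz : star z * z ∈ C := hmul _ (hstar _ hz) _ hz
  have hPle : Φ (star z * z) ≤ algebraMap ℝ B (‖z‖ ^ 2) := by
    have h0 : 0 ≤ algebraMap ℝ B (‖z‖ ^ 2) - star z * z :=
      sub_nonneg.2 CStarAlgebra.star_mul_le_algebraMap_norm_sq
    obtain ⟨w, hw⟩ := CStarAlgebra.nonneg_iff_eq_star_mul_self.1 h0
    have hcast : algebraMap ℝ B (‖z‖ ^ 2) = ((‖z‖ ^ 2 : ℝ) : ℂ) • (1 : B) := by
      rw [Algebra.algebraMap_eq_smul_one, Complex.coe_smul]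
    obtain ⟨N, hN⟩ := hcp 1 (Matrix.of fun _ _ => algebraMap ℝ B (‖z‖ ^ 2) - star z * z)
      (fun i j => by
        simp only [Matrix.of_apply]
        rw [hcast]
        exact hsub _ (hsmul _ _ h1) _ hzz)
      ⟨Matrix.of fun _ _ => w, by
        ext i j
        simp only [Matrix.mul_apply, Matrix.of_apply, Matrix.conjTranspose_apply,
          Fin.sum_univ_one, hw]⟩
    have h := congrFun (congrFun hN 0) 0
    simp only [Matrix.map_apply, Matrix.of_apply, Matrix.mul_apply, Matrix.conjTranspose_apply,
      Fin.sum_univ_one, map_sub] at h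
    rw [hcast, map_smul, hΦ1, ← hcast] at h
    rw [← sub_nonneg, h]
    exact star_mul_self_nonneg _
  have hT : star (Φ z) * Φ z ≤ Φ (star z * z) := by
    obtain ⟨N, hN⟩ := hcp 2 !![star z * z, star z; z, 1]
      (fun i j => by fin_cases i <;> fin_cases j <;> simp [hzz, hstar, hz, h1])
      ⟨!![z, 1; 0, 0], by
        ext i j
        fin_cases i <;> fin_cases j <;> simp [Matrix.mul_apply]⟩
    have h00 := congrFun (congrFun hN 0) 0
    have h10 := congrFun (congrFun hN 1) 0
    have h11 := congrFun (congrFun hN 1) 1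
    simp [Matrix.mul_apply, hΦ1] at h00 h10 h11
    have h01 : star (Φ z) = star (N 0 0) * N 0 1 + star (N 1 0) * N 1 1 := by
      rw [h10]; simp
    have key : Φ (star z * z) - star (Φ z) * Φ z =
        star (N 0 0 - N 0 1 * Φ z) * (N 0 0 - N 0 1 * Φ z) +
        star (N 1 0 - N 1 1 * Φ z) * (N 1 0 - N 1 1 * Φ z) := by
      have e : star (N 0 0 - N 0 1 * Φ z) * (N 0 0 - N 0 1 * Φ z) +
        star (N 1 0 - N 1 1 * Φ z) * (N 1 0 - N 1 1 * Φ z) =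
        (star (N 0 0) * N 0 0 + star (N 1 0) * N 1 0)
        - (star (N 0 0) * N 0 1 + star (N 1 0) * N 1 1) * Φ z
        - star (Φ z) * (star (N 0 1) * N 0 0 + star (N 1 1) * N 1 0)
        + star (Φ z) * (star (N 0 1) * N 0 1 + star (N 1 1) * N 1 1) * Φ z := by
        simp only [star_sub, star_mul]; noncomm_ring
      rw [e, ← h00, ← h01, ← h10, ← h11]
      noncomm_ring
    rw [← sub_nonneg, key]
    exact add_nonneg (star_mul_self_nonneg _) (star_mul_self_nonneg _)
  have h2 : ‖star (Φ z) * Φ z‖ ≤ ‖z‖ ^ 2 :=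
    (CStarAlgebra.norm_le_iff_le_algebraMap _ (by positivity) (star_mul_self_nonneg _)).2
      (hT.trans hPle)
  rw [CStarRing.norm_star_mul_self, ← sq] at h2
  exact (sq_le_sq₀ (norm_nonneg _) (norm_nonneg _)).1 h2

lemma aux_trace_bd {A : Type*} [CStarAlgebra A] [PartialOrder A] [StarOrderedRing A]
    (τ : A →ₗ[ℂ] ℂ) (hτpos : IsPositiveFunctional τ) (hτ1 : τ 1 = 1) (a : A) (ha : 0 ≤ a) :
    0 ≤ (τ a).re ∧ (τ a).re ≤ ‖a‖ := by
  constructor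
  · obtain ⟨w, rfl⟩ := CStarAlgebra.nonneg_iff_eq_star_mul_self.1 ha
    exact (Complex.le_def.1 (hτpos w)).1
  · have h0 : 0 ≤ algebraMap ℝ A ‖a‖ - a :=
      sub_nonneg.2 (IsSelfAdjoint.le_algebraMap_norm_self (.of_nonneg ha))
    obtain ⟨w, hw⟩ := CStarAlgebra.nonneg_iff_eq_star_mul_self.1 h0
    have h := (Complex.le_def.1 (hτpos w)).1
    have hcast : algebraMap ℝ A ‖a‖ = ((‖a‖ : ℝ) : ℂ) • (1 : A) := by
      rw [Algebra.algebraMap_eq_smul_one]; simp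
    rw [← hw, hcast, map_sub, map_smul, hτ1] at h
    simpa using h

lemma aux_reflect {A B : Type*} [CStarAlgebra A] [PartialOrder A] [StarOrderedRing A]
    [CStarAlgebra B] [PartialOrder B] [StarOrderedRing B]
    (ι : A →⋆ₙₐ[ℂ] B) (hisom : ∀ a : A, ‖ι a‖ = ‖a‖) (hι1 : ι 1 = 1)
    (a : A) (ha : 0 ≤ ι a) : 0 ≤ a := by
  have hinj : ∀ x y, ι x = ι y → x = y := fun x y h => by
    have : ‖x - y‖ = 0 := by rw [← hisom, map_sub, h, sub_self, norm_zero]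
    exact sub_eq_zero.1 (norm_eq_zero.1 this)
  have hsa : IsSelfAdjoint a := hinj _ _ (by
    rw [map_star]; exact (IsSelfAdjoint.of_nonneg ha))
  have h := (nonneg_iff_isSelfAdjoint_and_quasispectrumRestricts.1 ha)
  rw [nonneg_iff_isSelfAdjoint_and_quasispectrumRestricts]
  refine ⟨hsa, ?_⟩
  have h2 := h.2
  rw [← SpectrumRestricts, SpectrumRestricts.nnreal_iff_nnnorm h.1 le_rfl] at h2
  rw [← SpectrumRestricts, SpectrumRestricts.nnreal_iff_nnnorm hsa le_rfl]
  have e : ι (algebraMap ℝ A ‖a‖ - a) = algebraMap ℝ B ‖ι a‖ - ι a := by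
    rw [map_sub, hisom, Algebra.algebraMap_eq_smul_one, Algebra.algebraMap_eq_smul_one,
      ← Complex.coe_smul, ← Complex.coe_smul, map_smul, hι1]
  have h3 : ‖algebraMap ℝ B ‖ι a‖ - ι a‖ ≤ ‖ι a‖ := h2
  rw [← e, hisom, hisom] at h3
  exact h3

variable {H : Type*} [NormedAddCommGroup H] [InnerProductSpace ℂ H] [CompleteSpace H]
    {A : Type*} [CStarAlgebra A] {G : Type*} [Group G]

lemma aux_pi_apply (ι : A →⋆ₙₐ[ℂ] (H →L[ℂ] H)) (α : G → A ≃⋆ₐ[ℂ] A) (a : A)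
    (f : lp (fun _ : G => H) 2) (s : G) : (piRep ι α a f) s = ι (α s⁻¹ a) (f s) := rfl

lemma aux_lam_apply (t : G)
    (f : lp (fun _ : G => H) 2) (s : G) : (lam t f) s = f (t⁻¹ * s) := rfl

lemma aux_star_lam (t : G) : star (lam (H := H) t) = lam t⁻¹ := by
  symm
  rw [ContinuousLinearMap.star_eq_adjoint, ContinuousLinearMap.eq_adjoint_iff]
  intro f g
  rw [lp.inner_eq_tsum, lp.inner_eq_tsum]
  simp only [aux_lam_apply]
  rw [← (Equiv.mulLeft t⁻¹).tsum_eq]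
  simp

lemma aux_star_pi (ι : A →⋆ₙₐ[ℂ] (H →L[ℂ] H)) (α : G → A ≃⋆ₐ[ℂ] A) (a : A) :
    star (piRep ι α a) = piRep ι α (star a) := by
  symm
  rw [ContinuousLinearMap.star_eq_adjoint, ContinuousLinearMap.eq_adjoint_iff]
  intro f g
  rw [lp.inner_eq_tsum, lp.inner_eq_tsum]
  simp only [aux_pi_apply, map_star, ContinuousLinearMap.star_eq_adjoint,
    ContinuousLinearMap.adjoint_inner_left]

lemma aux_adj_single (t : G) :
    ContinuousLinearMap.adjoint (lpSingle (H := H) t) = lpEval t := by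
  classical
  symm
  rw [ContinuousLinearMap.eq_adjoint_iff]
  intro f h
  have : lpSingle (H := H) t h = lp.single 2 t h := by
    simp only [lpSingle, LinearMap.mkContinuous_apply, LinearMap.coe_mk, AddHom.coe_mk]
  rw [this, lp.inner_single_right]
  rfl

lemma aux_lam_pi (ι : A →⋆ₙₐ[ℂ] (H →L[ℂ] H)) (α : G → A ≃⋆ₐ[ℂ] A) (hα : IsAction α)
    (a : A) (t : G) : lam t * piRep ι α a = piRep ι α (α t a) * lam t := by
  ext f s
  simp only [mul_apply_eq_comp, aux_pi_apply, aux_lam_apply]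
  rw [← hα.2, _root_.mul_inv_rev, inv_inv]

lemma aux_pi_mul (ι : A →⋆ₙₐ[ℂ] (H →L[ℂ] H)) (α : G → A ≃⋆ₐ[ℂ] A)
    (a b : A) : piRep ι α a * piRep ι α b = piRep ι α (a * b) := by
  ext f s
  simp only [mul_apply_eq_comp, aux_pi_apply, map_mul]

lemma aux_lam_mul (s t : G) : lam (H := H) s * lam t = lam (s * t) := by
  ext f r
  simp only [mul_apply_eq_comp, aux_lam_apply, _root_.mul_inv_rev, mul_assoc]

lemma aux_lam_one : lam (H := H) (1 : G) = 1 := by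
  ext f r
  simp [aux_lam_apply]

lemma aux_pi_one (ι : A →⋆ₙₐ[ℂ] (H →L[ℂ] H)) (hι1 : ι 1 = 1) (α : G → A ≃⋆ₐ[ℂ] A) :
    piRep ι α 1 = 1 := by
  ext f r
  simp [aux_pi_apply, hι1]

def auxGen (ι : A →⋆ₙₐ[ℂ] (H →L[ℂ] H)) (α : G → A ≃⋆ₐ[ℂ] A) :
    Set (lp (fun _ : G => H) 2 →L[ℂ] lp (fun _ : G => H) 2) :=
  {x | ∃ (a : A) (t : G), x = piRep ι α a * lam t}

def auxSp (ι : A →⋆ₙₐ[ℂ] (H →L[ℂ] H)) (α : G → A ≃⋆ₐ[ℂ] A) :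
    Submodule ℂ (lp (fun _ : G => H) 2 →L[ℂ] lp (fun _ : G => H) 2) :=
  (Submodule.span ℂ (auxGen ι α)).topologicalClosure

lemma aux_mem (ι : A →⋆ₙₐ[ℂ] (H →L[ℂ] H)) (α : G → A ≃⋆ₐ[ℂ] A)
    (x : lp (fun _ : G => H) 2 →L[ℂ] lp (fun _ : G => H) 2) :
    x ∈ CrossedSet ι α ↔ x ∈ auxSp ι α := Iff.rfl

lemma aux_gen_mul (ι : A →⋆ₙₐ[ℂ] (H →L[ℂ] H)) (α : G → A ≃⋆ₐ[ℂ] A) (hα : IsAction α)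
    (a b : A) (s t : G) : (piRep ι α a * lam s) * (piRep ι α b * lam t) =
      piRep ι α (a * α s b) * lam (s * t) := by
  rw [← aux_pi_mul, ← aux_lam_mul, mul_assoc, ← mul_assoc (lam s), aux_lam_pi ι α hα]
  simp only [mul_assoc]

lemma aux_gen_star (ι : A →⋆ₙₐ[ℂ] (H →L[ℂ] H)) (α : G → A ≃⋆ₐ[ℂ] A) (hα : IsAction α)
    (a : A) (s : G) : star (piRep ι α a * lam s) =
      piRep ι α (α s⁻¹ (star a)) * lam s⁻¹ := by
  rw [star_mul, aux_star_lam, aux_star_pi, aux_lam_pi ι α hα]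

lemma aux_mul_mem (ι : A →⋆ₙₐ[ℂ] (H →L[ℂ] H)) (α : G → A ≃⋆ₐ[ℂ] A) (hα : IsAction α)
    (x) (hx : x ∈ CrossedSet ι α) (y) (hy : y ∈ CrossedSet ι α) :
    x * y ∈ CrossedSet ι α := by
  refine map_mem_closure₂ continuous_mul hx hy ?_
  intro u hu v hv
  have : u * v ∈ Submodule.span ℂ (auxGen ι α) * Submodule.span ℂ (auxGen ι α) :=
    Submodule.mul_mem_mul hu hv
  rw [Submodule.span_mul_span] at this
  refine Submodule.span_mono ?_ this
  rintro _ ⟨_, ⟨a, s, rfl⟩, _, ⟨b, t, rfl⟩, rfl⟩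
  exact ⟨_, _, aux_gen_mul ι α hα a b s t⟩

lemma aux_star_mem (ι : A →⋆ₙₐ[ℂ] (H →L[ℂ] H)) (α : G → A ≃⋆ₐ[ℂ] A) (hα : IsAction α)
    (x) (hx : x ∈ CrossedSet ι α) :
    star x ∈ CrossedSet ι α := by
  refine map_mem_closure continuous_star hx ?_
  intro u hu
  induction hu using Submodule.span_induction with
  | mem x h =>
    obtain ⟨a, t, rfl⟩ := h
    exact Submodule.subset_span ⟨_, _, aux_gen_star ι α hα a t⟩
  | zero => simp
  | add x y _ _ hx hy => rw [star_add]; exact Submodule.add_mem _ hx hy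
  | smul c x _ hx => rw [star_smul]; exact Submodule.smul_mem _ _ hx

lemma aux_gen_mem (ι : A →⋆ₙₐ[ℂ] (H →L[ℂ] H)) (α : G → A ≃⋆ₐ[ℂ] A) (a : A) (t : G) :
    piRep ι α a * lam t ∈ CrossedSet ι α :=
  subset_closure (Submodule.subset_span ⟨a, t, rfl⟩)

lemma aux_q_bd (ι : A →⋆ₙₐ[ℂ] (H →L[ℂ] H)) (hisom : ∀ a : A, ‖ι a‖ = ‖a‖)
    (hι1 : ι 1 = 1) (α : G → A ≃⋆ₐ[ℂ] A) (hα : IsAction α)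
    (τ : A →ₗ[ℂ] ℂ) (hτpos : IsPositiveFunctional τ) (hτ1 : τ 1 = 1)
    (E : (lp (fun _ : G => H) 2 →L[ℂ] lp (fun _ : G => H) 2) →ₗ[ℂ] A)
    (hE : IsCondExp ι α E) (x) (hx : x ∈ CrossedSet ι α) :
    0 ≤ (τ (E (star x * x))).re ∧ (τ (E (star x * x))).re ≤ ‖x‖ ^ 2 := by
  letI : PartialOrder A := CStarAlgebra.spectralOrder A
  haveI : StarOrderedRing A := CStarAlgebra.spectralOrderedRing A
  have h := hE _ (aux_mul_mem ι α hα _ (aux_star_mem ι α hα x hx) x hx)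
  have hs : ‖lpSingle (H := H) (1 : G)‖ ≤ 1 := LinearMap.mkContinuous_norm_le _ zero_le_one _
  have he : ‖lpEval (H := H) (1 : G)‖ ≤ 1 := LinearMap.mkContinuous_norm_le _ zero_le_one _
  have hpos : 0 ≤ E (star x * x) := by
    apply aux_reflect ι hisom hι1
    rw [h, ContinuousLinearMap.nonneg_iff_isPositive, ← aux_adj_single]
    exact ContinuousLinearMap.IsPositive.adjoint_conj
      ((ContinuousLinearMap.nonneg_iff_isPositive _).1 (star_mul_self_nonneg x)) _
  have hn : ‖E (star x * x)‖ ≤ ‖x‖ ^ 2 := by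
    rw [← hisom, h]
    calc _ ≤ ‖lpEval (H := H) (1 : G)‖ * (‖star x * x‖ * ‖lpSingle (H := H) (1 : G)‖) :=
          (ContinuousLinearMap.opNorm_comp_le _ _).trans
            (mul_le_mul_of_nonneg_left (ContinuousLinearMap.opNorm_comp_le _ _) (norm_nonneg _))
      _ ≤ 1 * (‖star x * x‖ * 1) := by gcongr
      _ = ‖x‖ ^ 2 := by rw [show ‖star x * x‖ = ‖x‖ * ‖x‖ from CStarRing.norm_star_mul_self]; ring
  obtain ⟨p, q⟩ := aux_trace_bd τ hτpos hτ1 _ hpos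
  exact ⟨p, q.trans hn⟩

lemma aux_q_gen (ι : A →⋆ₙₐ[ℂ] (H →L[ℂ] H)) (hisom : ∀ a : A, ‖ι a‖ = ‖a‖)
    (α : G → A ≃⋆ₐ[ℂ] A) (hα : IsAction α)
    (τ : A →ₗ[ℂ] ℂ) (hτα : ∀ (t : G) (a : A), τ (α t a) = τ a)
    (E : (lp (fun _ : G => H) 2 →L[ℂ] lp (fun _ : G => H) 2) →ₗ[ℂ] A)
    (hE : IsCondExp ι α E) (b : A) (t : G) :
    l2normCr τ E (piRep ι α b * lam t) = l2norm τ b := by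
  unfold l2normCr l2norm
  have h := hE (piRep ι α (α t⁻¹ (star b * b)) * lam 1) (aux_gen_mem ι α _ _)
  have h2 : lpEval (1 : G) ∘L (piRep ι α (α t⁻¹ (star b * b)) * lam 1) ∘L lpSingle (1 : G)
      = ι (α t⁻¹ (star b * b)) := by
    classical
    ext v
    have : lpSingle (H := H) (1 : G) v = lp.single 2 1 v := by
      simp only [lpSingle, LinearMap.mkContinuous_apply, LinearMap.coe_mk, AddHom.coe_mk]
    rw [aux_lam_one, mul_one, ContinuousLinearMap.comp_apply, ContinuousLinearMap.comp_apply, this]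
    change ι (α 1⁻¹ _) ((lp.single (E := fun _ : G => H) 2 (1 : G) v) 1) = _
    rw [lp.single_apply_self, inv_one, hα.1]
  rw [h2] at h
  have h3 : E (piRep ι α (α t⁻¹ (star b * b)) * lam 1) = α t⁻¹ (star b * b) := by
    have : ‖E (piRep ι α (α t⁻¹ (star b * b)) * lam 1) - α t⁻¹ (star b * b)‖ = 0 := by
      rw [← hisom, map_sub, h, sub_self, norm_zero]
    exact sub_eq_zero.1 (norm_eq_zero.1 this)
  rw [aux_gen_star ι α hα, aux_gen_mul ι α hα, ← map_mul, inv_mul_cancel, h3, hτα]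

lemma aux_l2_add (ι : A →⋆ₙₐ[ℂ] (H →L[ℂ] H)) (hisom : ∀ a : A, ‖ι a‖ = ‖a‖)
    (hι1 : ι 1 = 1) (α : G → A ≃⋆ₐ[ℂ] A) (hα : IsAction α)
    (τ : A →ₗ[ℂ] ℂ) (hτpos : IsPositiveFunctional τ) (hτ1 : τ 1 = 1)
    (E : (lp (fun _ : G => H) 2 →L[ℂ] lp (fun _ : G => H) 2) →ₗ[ℂ] A)
    (hE : IsCondExp ι α E) (x) (hx : x ∈ CrossedSet ι α) (y) (hy : y ∈ CrossedSet ι α) :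
    l2normCr τ E (x + y) ≤ 2 * (l2normCr τ E x + l2normCr τ E y) := by
  have hm := (aux_q_bd ι hisom hι1 α hα τ hτpos hτ1 E hE (x - y)
    ((auxSp ι α).sub_mem hx hy)).1
  have hxx := (aux_q_bd ι hisom hι1 α hα τ hτpos hτ1 E hE x hx).1
  have hyy := (aux_q_bd ι hisom hι1 α hα τ hτpos hτ1 E hE y hy).1
  have hid : star (x + y) * (x + y) + star (x - y) * (x - y)
      = (star x * x + star x * x) + (star y * y + star y * y) := by
    simp only [star_add, star_sub]; noncomm_ring
  have h := congrArg (fun z => (τ (E z)).re) hid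
  simp only [map_add, Complex.add_re] at h
  unfold l2normCr
  apply Real.sqrt_le_iff.2
  refine ⟨by positivity, ?_⟩
  have e1 := Real.sq_sqrt hxx
  have e2 := Real.sq_sqrt hyy
  have p1 := Real.sqrt_nonneg (τ (E (star x * x))).re
  have p2 := Real.sqrt_nonneg (τ (E (star y * y))).re
  nlinarith [mul_nonneg p1 p2]

lemma aux_l2_smul (τ : A →ₗ[ℂ] ℂ)
    (E : (lp (fun _ : G => H) 2 →L[ℂ] lp (fun _ : G => H) 2) →ₗ[ℂ] A) (c : ℂ) (x) :
    l2normCr τ E (c • x) = ‖c‖ * l2normCr τ E x := by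
  unfold l2normCr
  have : star (c • x) * (c • x) = ((‖c‖ ^ 2 : ℝ) : ℂ) • (star x * x) := by
    rw [star_smul, smul_mul_smul_comm]
    congr 1
    simpa using Complex.conj_mul' c
  rw [this, map_smul, map_smul, smul_eq_mul, Complex.re_ofReal_mul,
    Real.sqrt_mul (by positivity), Real.sqrt_sq (norm_nonneg _)]

end Helpers

/-- **Lemma 3.7.** Let `(F_i)` be a net of completely positive Herz-Schur
`(A,G,α)`-multipliers (with completely positive extensions `Φ_i = S_{F_i}` to
`A ⋊_{α,r} G`) such that every `F_i(e)` is unital and `τ ∘ F_i(e) ≤ τ`.  Then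
`‖S_{F_i}(x) − x‖_{2,τ'} → 0` for every `x ∈ A ⋊_{α,r} G` if and only if
`‖F_i(t)(a) − a‖_{2,τ} → 0` for all `t ∈ G` and `a ∈ A`. -/
theorem SF_L2_convergence_iff
    {H : Type*} [NormedAddCommGroup H] [InnerProductSpace ℂ H] [CompleteSpace H]
    {A : Type*} [CStarAlgebra A] {G : Type*} [Group G]
    (ι : A →⋆ₙₐ[ℂ] (H →L[ℂ] H)) (hisom : ∀ a : A, ‖ι a‖ = ‖a‖)
    (hnd : NondegenerateRep ι) (hι1 : ι 1 = 1)
    (α : G → A ≃⋆ₐ[ℂ] A) (hα : IsAction α)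
    (τ : A →ₗ[ℂ] ℂ) (hτpos : IsPositiveFunctional τ) (hτtr : IsTracial τ)
    (hτf : IsFaithfulFunctional τ) (hτ1 : τ 1 = 1)
    (hτα : ∀ (t : G) (a : A), τ (α t a) = τ a)
    (E : (lp (fun _ : G => H) 2 →L[ℂ] lp (fun _ : G => H) 2) →ₗ[ℂ] A)
    (hE : IsCondExp ι α E)
    (I : Type*) [Nonempty I] [SemilatticeSup I]
    (F : I → G → (A →ₗ[ℂ] A))
    (Φ : I → ((lp (fun _ : G => H) 2 →L[ℂ] lp (fun _ : G => H) 2) →ₗ[ℂ]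
              (lp (fun _ : G => H) 2 →L[ℂ] lp (fun _ : G => H) 2)))
    (hgen : ∀ i, HSGenProp ι α (F i) (Φ i))
    (hCP : ∀ i, CPOnCrossed ι α (Φ i))
    (hunital : ∀ i, F i 1 1 = 1)
    (hτF : ∀ i (a : A), τ (F i 1 (star a * a)) ≤ τ (star a * a)) :
    (∀ x ∈ CrossedSet ι α,
        Tendsto (fun i => l2normCr τ E (Φ i x - x)) atTop (nhds 0)) ↔
    (∀ (t : G) (a : A),
        Tendsto (fun i => l2norm τ (F i t a - a)) atTop (nhds 0)) := by
  have hpi_sub : ∀ a b : A, piRep ι α a - piRep ι α b = piRep ι α (a - b) := fun a b =>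
    ((piRepLin ι α).map_sub a b).symm
  have hgenq : ∀ (i : I) (t : G) (a : A),
      l2normCr τ E (Φ i (piRep ι α a * lam t) - piRep ι α a * lam t)
        = l2norm τ (F i t a - a) := by
    intro i t a
    rw [hgen i a t, ← sub_mul, hpi_sub, aux_q_gen ι hisom α hα τ hτα E hE]
  constructor
  · intro h t a
    simpa only [hgenq] using h _ (aux_gen_mem ι α a t)
  intro h
  have hcr0 : ∀ z, 0 ≤ l2normCr τ E z := fun z => Real.sqrt_nonneg _
  have hadd := aux_l2_add ι hisom hι1 α hα τ hτpos hτ1 E hE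
  have hle : ∀ z ∈ CrossedSet ι α, l2normCr τ E z ≤ ‖z‖ := fun z hz =>
    Real.sqrt_le_iff.2 ⟨norm_nonneg _, (aux_q_bd ι hisom hι1 α hα τ hτpos hτ1 E hE z hz).2⟩
  have hone : piRep ι α 1 * lam 1 = 1 := by rw [aux_pi_one ι hι1, aux_lam_one, mul_one]
  have hcontr : ∀ i, ∀ z ∈ CrossedSet ι α, ‖Φ i z‖ ≤ ‖z‖ := fun i z hz =>
    aux_contr (CrossedSet ι α) (Φ i) (hone ▸ aux_gen_mem ι α 1 1)
      (aux_mul_mem ι α hα) (aux_star_mem ι α hα)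
      (fun x hx y hy => (auxSp ι α).sub_mem hx hy)
      (fun c x hx => (auxSp ι α).smul_mem c hx)
      (by rw [← hone, hgen i, hunital]) (hCP i).2 z hz
  have hdiff : ∀ i, ∀ z ∈ CrossedSet ι α, Φ i z - z ∈ CrossedSet ι α := fun i z hz =>
    (auxSp ι α).sub_mem ((hCP i).1 z hz) hz
  have hspan : ∀ y ∈ Submodule.span ℂ (auxGen ι α),
      Tendsto (fun i => l2normCr τ E (Φ i y - y)) atTop (nhds 0) := by
    intro y hy
    induction hy using Submodule.span_induction with
    | mem x hx =>
      obtain ⟨a, t, rfl⟩ := hx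
      simpa only [hgenq] using h t a
    | zero => simp [l2normCr]
    | add x y hx hy ihx ihy =>
      have hb := (ihx.add ihy).const_mul 2
      rw [add_zero, mul_zero] at hb
      refine squeeze_zero (fun i => hcr0 _) (fun i => ?_) hb
      rw [map_add, add_sub_add_comm]
      exact hadd _ (hdiff i x (subset_closure hx)) _ (hdiff i y (subset_closure hy))
    | smul c x hx ihx =>
      have hb := ihx.const_mul ‖c‖
      rw [mul_zero] at hb
      refine hb.congr (fun i => ?_)
      rw [map_smul, ← smul_sub, aux_l2_smul]
  intro x hx
  rw [Metric.tendsto_nhds]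
  intro ε hε
  obtain ⟨y, hy, hxy⟩ := Metric.mem_closure_iff.1 hx (ε / 8) (by positivity)
  rw [dist_eq_norm] at hxy
  have hyC : y ∈ CrossedSet ι α := subset_closure hy
  filter_upwards [(Metric.tendsto_nhds.1 (hspan y hy)) (ε / 4) (by positivity)] with i hi
  rw [Real.dist_0_eq_abs, abs_of_nonneg (hcr0 _)] at hi ⊢
  have hz : x - y ∈ CrossedSet ι α := (auxSp ι α).sub_mem hx hyC
  have e : Φ i x - x = (Φ i (x - y) - (x - y)) + (Φ i y - y) := by
    rw [map_sub]; abel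
  have h1 := hadd _ (hdiff i _ hz) _ (hdiff i y hyC)
  rw [← e] at h1
  have h2 : l2normCr τ E (Φ i (x - y) - (x - y)) < ε / 4 := by
    calc _ ≤ ‖Φ i (x - y) - (x - y)‖ := hle _ (hdiff i _ hz)
      _ ≤ ‖Φ i (x - y)‖ + ‖x - y‖ := norm_sub_le _ _
      _ ≤ ‖x - y‖ + ‖x - y‖ := by gcongr; exact hcontr i _ hz
      _ < ε / 4 := by linarith
  linarith

end
end

section
/- Let G be a discrete group and (A,G,α) a C*-dynamical system. Then (A,G,α) is nuclear if and only if the reduced crossed product A⋊_{α,r}G is a nuclear C*-algebra. -/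
noncomputable section
open scoped ComplexOrder ENNReal
open Matrix

set_option linter.all false
set_option linter.deprecated false

section P1
variable {K : Type*} [NormedAddCommGroup K] [InnerProductSpace ℂ K] [CompleteSpace K]
variable {ν : Type*} [Fintype ν]

/-- positivity of the quadratic form -/
def PosQ (M : Matrix ν ν (K →L[ℂ] K)) : Prop :=
  ∀ ξ : ν → K, 0 ≤ ∑ p, ∑ q, inner ℂ (ξ p) (M p q (ξ q))

theorem matOp_apply (M : Matrix ν ν (K →L[ℂ] K)) (x : PiLp 2 (fun _ : ν => K)) (i : ν) :
    matOp M x i = ∑ j, M i j (x j) := by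
  simp [matOp]

theorem inner_matOp (M : Matrix ν ν (K →L[ℂ] K)) (x y : PiLp 2 (fun _ : ν => K)) :
    inner ℂ x (matOp M y) = ∑ p, ∑ q, inner ℂ (x p) (M p q (y q)) := by
  simp [PiLp.inner_apply, matOp_apply, inner_sum]

theorem cinner_self_nonneg (v : K) : (0 : ℂ) ≤ inner ℂ v v := by
  have h : inner ℂ v v = ((‖v‖ ^ 2 : ℝ) : ℂ) := by
    rw [inner_self_eq_norm_sq_to_K]; push_cast; rfl
  rw [h]
  exact Complex.zero_le_real.2 (sq_nonneg _)

theorem MatPos.posQ {M : Matrix ν ν (K →L[ℂ] K)} (h : MatPos M) : PosQ M := by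
  obtain ⟨N, rfl⟩ := h
  intro ξ
  have : ∑ p, ∑ q, inner ℂ (ξ p) ((Nᴴ * N) p q (ξ q))
      = ∑ k, inner ℂ (∑ p, N k p (ξ p)) (∑ q, N k q (ξ q)) := by
    simp only [Matrix.mul_apply, Matrix.conjTranspose_apply, ContinuousLinearMap.sum_apply,
      inner_sum, sum_inner, ContinuousLinearMap.mul_apply,
      ContinuousLinearMap.star_eq_adjoint, ContinuousLinearMap.adjoint_inner_right]
    calc _ = ∑ p, ∑ k, ∑ q, inner ℂ (N k p (ξ p)) (N k q (ξ q)) :=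
          Finset.sum_congr rfl fun p _ => Finset.sum_comm
      _ = ∑ k, ∑ p, ∑ q, inner ℂ (N k p (ξ p)) (N k q (ξ q)) := Finset.sum_comm
      _ = _ := Finset.sum_congr rfl fun k _ => Finset.sum_comm
  rw [this]
  refine Finset.sum_nonneg fun k _ => ?_
  exact cinner_self_nonneg _

theorem isPositive_of_inner {T : K →L[ℂ] K} (h : ∀ x, 0 ≤ inner ℂ x (T x)) : T.IsPositive := by
  rw [ContinuousLinearMap.isPositive_iff_complex]
  intro x
  have h1 := h x
  have h2 : inner ℂ (T x) x = (starRingEnd ℂ) (inner ℂ x (T x)) := (inner_conj_symm _ _).symm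
  rw [h2]
  generalize inner ℂ x (T x) = z at h1
  rw [Complex.nonneg_iff] at h1
  constructor
  · apply Complex.ext <;> simp [← h1.2]
  · simpa using h1.1

theorem exists_sqrt {T : K →L[ℂ] K} (h : ∀ x, 0 ≤ inner ℂ x (T x)) :
    ∃ S : K →L[ℂ] K, T = star S * S :=
  CStarAlgebra.nonneg_iff_eq_star_mul_self.mp
    ((ContinuousLinearMap.nonneg_iff_isPositive _).2 (isPositive_of_inner h))

theorem PosQ.matPos {M : Matrix ν ν (K →L[ℂ] K)} (h : PosQ M) : MatPos M := by
  classical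
  obtain ⟨S, hS⟩ := exists_sqrt (T := matOp M) (fun x => by rw [inner_matOp]; exact h x)
  let J : ν → (K →L[ℂ] PiLp 2 (fun _ : ν => K)) := fun q =>
    ((PiLp.continuousLinearEquiv 2 ℂ (fun _ : ν => K)).symm :
      (∀ _ : ν, K) →L[ℂ] PiLp 2 (fun _ : ν => K)) ∘L (ContinuousLinearMap.single ℂ (fun _ => K) q)
  let P : ν → (PiLp 2 (fun _ : ν => K) →L[ℂ] K) := fun q =>
    (ContinuousLinearMap.proj q) ∘L
      ((PiLp.continuousLinearEquiv 2 ℂ (fun _ : ν => K)) :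
          PiLp 2 (fun _ : ν => K) →L[ℂ] ∀ _ : ν, K)
  have hJ : ∀ q v p, J q v p = if p = q then v else 0 := by
    intro q v p
    simp [J, Pi.single_apply]
  have hP : ∀ q x, P q x = x q := by intro q x; simp [P]
  refine ⟨Matrix.of fun k q => P k ∘L S ∘L J q, ?_⟩
  ext p q v
  apply ext_inner_left ℂ
  intro w
  have e1 : inner ℂ (J p w) (matOp M (J q v)) = inner ℂ w (M p q v) := by
    rw [inner_matOp]
    rw [Finset.sum_eq_single p, Finset.sum_eq_single q]
    · simp [hJ]
    · intro b _ hb; simp [hJ, hb]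
    · simp
    · intro b _ hb; simp [hJ, hb]
    · simp
  rw [← e1, hS]
  simp only [Matrix.mul_apply, Matrix.conjTranspose_apply, ContinuousLinearMap.sum_apply,
      inner_sum, ContinuousLinearMap.mul_apply,
      ContinuousLinearMap.star_eq_adjoint, ContinuousLinearMap.adjoint_inner_right,
      Matrix.of_apply, ContinuousLinearMap.comp_apply, hP, PiLp.inner_apply]

theorem PosQ.matPos_iff {M : Matrix ν ν (K →L[ℂ] K)} : MatPos M ↔ PosQ M :=
  ⟨MatPos.posQ, PosQ.matPos⟩

theorem PosQ.herm {M : Matrix ν ν (K →L[ℂ] K)} (h : PosQ M) (p q : ν) :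
    star (M p q) = M q p := by
  obtain ⟨N, rfl⟩ := h.matPos
  simp [Matrix.mul_apply]

theorem PosQ.reindex {μ : Type*} [Fintype μ] (e : μ ≃ ν) {M : Matrix ν ν (K →L[ℂ] K)} :
    PosQ (Matrix.of fun i j => M (e i) (e j)) ↔ PosQ M := by
  constructor
  · intro h ξ
    have := h (ξ ∘ e)
    simp only [Matrix.of_apply, Function.comp] at this
    rw [← e.sum_comp]
    simp_rw [← e.sum_comp (fun q => inner ℂ _ (M _ q (ξ q)))]
    exact this
  · intro h ξ
    have := h (ξ ∘ e.symm)
    rw [← e.sum_comp] at this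
    simp_rw [← e.sum_comp (fun q => inner ℂ _ (M _ q ((ξ ∘ e.symm) q)))] at this
    simpa using this

end P1
end

noncomputable section
open scoped ComplexOrder ENNReal
open Matrix
set_option linter.all false
set_option linter.deprecated false

section P2
open Filter Topology
variable {H : Type*} [NormedAddCommGroup H] [InnerProductSpace ℂ H] [CompleteSpace H]
variable {A : Type*} [NonUnitalCStarAlgebra A] {G : Type*} [Group G]

theorem lpSingle_self (x : G) (ξ : H) : (lpSingle x ξ : lp (fun _ : G => H) 2) x = ξ := by
  classical
  simp [lpSingle]

theorem lpSingle_ne {x y : G} (h : y ≠ x) (ξ : H) :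
    (lpSingle x ξ : lp (fun _ : G => H) 2) y = 0 := by
  classical
  simp [lpSingle, lp.single_apply, h]

theorem lpSingle_inner (x : G) (ξ : H) (f : lp (fun _ : G => H) 2) :
    inner ℂ (lpSingle x ξ) f = inner ℂ ξ (f x) := by
  classical
  exact lp.inner_single_left (𝕜 := ℂ) (G := fun _ : G => H) x ξ f

theorem inner_lpSingle (x : G) (ξ : H) (f : lp (fun _ : G => H) 2) :
    inner ℂ f (lpSingle x ξ) = inner ℂ (f x) ξ := by
  classical
  exact lp.inner_single_right (𝕜 := ℂ) (G := fun _ : G => H) x ξ f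

theorem lpSingle_norm (x : G) (ξ : H) : ‖(lpSingle x ξ : lp (fun _ : G => H) 2)‖ ≤ ‖ξ‖ := by
  classical
  exact (lp.norm_single (p := 2) (E := fun _ : G => H) (by norm_num) x ξ).le

theorem lpEval_apply (x : G) (f : lp (fun _ : G => H) 2) : lpEval x f = f x := rfl

theorem lpEval_norm (x : G) (f : lp (fun _ : G => H) 2) : ‖f x‖ ≤ ‖f‖ :=
  lp.norm_apply_le_norm (by norm_num) f x

theorem lam_apply (t s : G) (f : lp (fun _ : G => H) 2) : (lam t f) s = f (t⁻¹ * s) := rfl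

theorem lam_one : (lam (1 : G) : lp (fun _ : G => H) 2 →L[ℂ] _) = 1 := by
  ext f s
  simp [lam_apply]

theorem lam_mul (s t : G) : (lam s : lp (fun _ : G => H) 2 →L[ℂ] _) * lam t = lam (s * t) := by
  ext f r
  simp [lam_apply, mul_assoc]

theorem lam_star (s : G) : star (lam s : lp (fun _ : G => H) 2 →L[ℂ] _) = lam s⁻¹ := by
  rw [ContinuousLinearMap.star_eq_adjoint]
  symm
  rw [ContinuousLinearMap.eq_adjoint_iff]
  intro f g
  rw [lp.inner_eq_tsum, lp.inner_eq_tsum, ← (Equiv.mulLeft s⁻¹).tsum_eq]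
  simp [lam_apply]

theorem lam_norm_le (s : G) : ‖(lam s : lp (fun _ : G => H) 2 →L[ℂ] _)‖ ≤ 1 :=
  LinearMap.mkContinuous_norm_le _ (by norm_num) _

theorem lam_mul_inv (s : G) : (lam s : lp (fun _ : G => H) 2 →L[ℂ] _) * lam s⁻¹ = 1 := by
  rw [lam_mul, mul_inv_cancel, lam_one]
theorem lam_inv_mul (s : G) : (lam s⁻¹ : lp (fun _ : G => H) 2 →L[ℂ] _) * lam s = 1 := by
  rw [lam_mul, inv_mul_cancel, lam_one]

variable (ι : A →⋆ₙₐ[ℂ] (H →L[ℂ] H)) (α : G → A ≃⋆ₐ[ℂ] A)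

theorem piRep_apply (a : A) (f : lp (fun _ : G => H) 2) (s : G) :
    (piRep ι α a f) s = ι (α s⁻¹ a) (f s) := rfl

theorem piRep_norm_le (a : A) : ‖piRep ι α a‖ ≤ ‖a‖ := by
  have h : ‖piRep ι α a‖ ≤ max ‖a‖ 0 := by
    unfold piRep diagOp
    exact LinearMap.mkContinuous_norm_le _ (le_max_right _ _) _
  simpa using h

theorem piRep_mul (a b : A) : piRep ι α a * piRep ι α b = piRep ι α (a * b) := by
  ext f s
  simp [piRep_apply]

theorem piRep_star (a : A) : star (piRep ι α a) = piRep ι α (star a) := by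
  rw [ContinuousLinearMap.star_eq_adjoint]
  symm
  rw [ContinuousLinearMap.eq_adjoint_iff]
  intro f g
  rw [lp.inner_eq_tsum, lp.inner_eq_tsum]
  congr 1
  ext s
  rw [piRep_apply, piRep_apply, map_star, map_star, ContinuousLinearMap.star_eq_adjoint,
    ContinuousLinearMap.adjoint_inner_left]

theorem piRep_add (a b : A) : piRep ι α (a + b) = piRep ι α a + piRep ι α b :=
  (piRepLin ι α).map_add a b
theorem piRep_sub (a b : A) : piRep ι α (a - b) = piRep ι α a - piRep ι α b :=
  (piRepLin ι α).map_sub a b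
theorem piRep_smul (c : ℂ) (a : A) : piRep ι α (c • a) = c • piRep ι α a :=
  (piRepLin ι α).map_smul c a
theorem piRep_zero : piRep ι α 0 = 0 :=
  (piRepLin ι α).map_zero

variable {α} in
theorem lam_piRep (hα : IsAction α) (s : G) (a : A) :
    lam s * piRep ι α a = piRep ι α (α s a) * lam s := by
  ext f r
  simp [piRep_apply, lam_apply, ← hα.2]

/-- algebraic crossed product -/
def AlgC : Submodule ℂ (lp (fun _ : G => H) 2 →L[ℂ] lp (fun _ : G => H) 2) :=
  Submodule.span ℂ {x | ∃ (a : A) (t : G), x = piRep ι α a * lam t}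

/-- reduced crossed product as a submodule -/
def CrC : Submodule ℂ (lp (fun _ : G => H) 2 →L[ℂ] lp (fun _ : G => H) 2) :=
  (AlgC ι α).topologicalClosure

theorem mem_CrC {x} : x ∈ CrossedSet ι α ↔ x ∈ CrC ι α := Iff.rfl

theorem AlgC_le : AlgC ι α ≤ CrC ι α := Submodule.le_topologicalClosure _

theorem gen_mem (a : A) (t : G) : piRep ι α a * lam t ∈ AlgC ι α :=
  Submodule.subset_span ⟨a, t, rfl⟩

theorem pi_mem (a : A) : piRep ι α a ∈ AlgC ι α := by
  have := gen_mem ι α a 1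
  rwa [lam_one, mul_one] at this

theorem CrC_closed : IsClosed (CrC ι α : Set (lp (fun _ : G => H) 2 →L[ℂ] lp (fun _ : G => H) 2)) :=
  Submodule.isClosed_topologicalClosure _

theorem CrC_seq {x} (hx : x ∈ CrC ι α) : ∃ u : ℕ → _, (∀ n, u n ∈ AlgC ι α) ∧
    Tendsto u atTop (𝓝 x) := mem_closure_iff_seq_limit.1 hx

/-- a continuous additive homogeneous map preserving `AlgC` preserves `CrC` -/
theorem CrC_map_of {T : (lp (fun _ : G => H) 2 →L[ℂ] lp (fun _ : G => H) 2) →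
      (lp (fun _ : G => H) 2 →L[ℂ] lp (fun _ : G => H) 2)}
    (hT : Continuous T) (h : ∀ x ∈ AlgC ι α, T x ∈ AlgC ι α) {x} (hx : x ∈ CrC ι α) :
    T x ∈ CrC ι α := by
  have : Set.MapsTo T (AlgC ι α : Set _) (AlgC ι α : Set _) := h
  exact this.closure hT hx

variable {α} (hα : IsAction α)
include hα

theorem gen_star (a : A) (t : G) :
    star (piRep ι α a * lam t) = piRep ι α (α t⁻¹ (star a)) * lam t⁻¹ := by
  rw [star_mul, lam_star, piRep_star, lam_piRep ι hα]

theorem AlgC_star {x} (hx : x ∈ AlgC ι α) : star x ∈ AlgC ι α := by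
  refine Submodule.span_induction (p := fun x _ => star x ∈ AlgC ι α) ?_ ?_ ?_ ?_ hx
  · rintro _ ⟨a, t, rfl⟩
    rw [gen_star ι hα]
    exact gen_mem ι α _ _
  · simp
  · intro x y _ _ h1 h2
    rw [star_add]; exact add_mem h1 h2
  · intro c x _ h
    rw [star_smul]; exact Submodule.smul_mem _ _ h

theorem CrC_star {x} (hx : x ∈ CrC ι α) : star x ∈ CrC ι α :=
  CrC_map_of ι α continuous_star (fun _ h => AlgC_star ι hα h) hx

theorem AlgC_lam {x} (hx : x ∈ AlgC ι α) (s : G) : x * lam s ∈ AlgC ι α := by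
  refine Submodule.span_induction (p := fun x _ => x * lam s ∈ AlgC ι α) ?_ ?_ ?_ ?_ hx
  · rintro _ ⟨a, t, rfl⟩
    rw [mul_assoc, lam_mul]
    exact gen_mem ι α _ _
  · simp
  · intro x y _ _ h1 h2
    rw [add_mul]; exact add_mem h1 h2
  · intro c x _ h
    rw [smul_mul_assoc]; exact Submodule.smul_mem _ _ h

theorem CrC_lam {x} (hx : x ∈ CrC ι α) (s : G) : x * lam s ∈ CrC ι α :=
  CrC_map_of ι α (continuous_id.mul continuous_const) (fun _ h => AlgC_lam ι hα h s) hx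

theorem AlgC_lam_left {x} (hx : x ∈ AlgC ι α) (s : G) : lam s * x ∈ AlgC ι α := by
  have := AlgC_star ι hα (AlgC_lam ι hα (AlgC_star ι hα hx) s⁻¹)
  rwa [star_mul, star_star, lam_star, inv_inv] at this

theorem CrC_lam_left {x} (hx : x ∈ CrC ι α) (s : G) : lam s * x ∈ CrC ι α :=
  CrC_map_of ι α (continuous_const.mul continuous_id) (fun _ h => AlgC_lam_left ι hα h s) hx

theorem AlgC_pi_left {x} (hx : x ∈ AlgC ι α) (a : A) : piRep ι α a * x ∈ AlgC ι α := by
  refine Submodule.span_induction (p := fun x _ => piRep ι α a * x ∈ AlgC ι α) ?_ ?_ ?_ ?_ hx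
  · rintro _ ⟨b, t, rfl⟩
    rw [← mul_assoc, piRep_mul]
    exact gen_mem ι α _ _
  · simp
  · intro x y _ _ h1 h2
    rw [mul_add]; exact add_mem h1 h2
  · intro c x _ h
    rw [mul_smul_comm]; exact Submodule.smul_mem _ _ h

theorem AlgC_pi_right {x} (hx : x ∈ AlgC ι α) (a : A) : x * piRep ι α a ∈ AlgC ι α := by
  have := AlgC_star ι hα (AlgC_pi_left ι hα (AlgC_star ι hα hx) (star a))
  rwa [star_mul, star_star, piRep_star, star_star] at this

theorem AlgC_conj {x} (hx : x ∈ AlgC ι α) (a : A) : piRep ι α a * x * piRep ι α a ∈ AlgC ι α :=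
  AlgC_pi_right ι hα (AlgC_pi_left ι hα hx a) a

theorem CrC_conj {x} (hx : x ∈ CrC ι α) (a : A) : piRep ι α a * x * piRep ι α a ∈ CrC ι α :=
  CrC_map_of ι α (T := fun x => piRep ι α a * x * piRep ι α a) (by fun_prop)
    (fun _ h => AlgC_conj ι hα h a) hx

/-- approximate unit -/
theorem exists_approx : ∃ l : Filter A, l.NeBot ∧ (∀ᶠ e in l, star e = e ∧ ‖e‖ ≤ 1) ∧
    ∀ x ∈ CrC ι α, Tendsto (fun e => piRep ι α e * x * piRep ι α e) l (𝓝 x) := by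
  letI := CStarAlgebra.spectralOrder A
  haveI := CStarAlgebra.spectralOrderedRing A
  have hl := CStarAlgebra.increasingApproximateUnit A
  refine ⟨CStarAlgebra.approximateUnit A, inferInstance, ?_, ?_⟩
  · filter_upwards [hl.eventually_norm, hl.eventually_star_eq] with e h1 h2
    exact ⟨h2, h1⟩
  have hn : ∀ᶠ e in CStarAlgebra.approximateUnit A, ‖e‖ ≤ 1 := hl.eventually_norm
  have hbd : ∀ e : A, ‖e‖ ≤ 1 → ∀ x, ‖piRep ι α e * x * piRep ι α e‖ ≤ ‖x‖ := by
    intro e he x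
    have h1 := (piRep_norm_le ι α e).trans he
    calc _ ≤ ‖piRep ι α e‖ * ‖x‖ * ‖piRep ι α e‖ :=
          (norm_mul_le _ _).trans (mul_le_mul_of_nonneg_right (norm_mul_le _ _) (norm_nonneg _))
      _ ≤ 1 * ‖x‖ * 1 := by gcongr
      _ = _ := by ring
  -- closedness argument
  intro x hx
  have hal : ∀ x ∈ AlgC ι α, Tendsto (fun e => piRep ι α e * x * piRep ι α e)
      (CStarAlgebra.approximateUnit A) (𝓝 x) := by
    intro x hx
    refine Submodule.span_induction (p := fun x _ => Tendsto (fun e => piRep ι α e * x * piRep ι α e)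
      (CStarAlgebra.approximateUnit A) (𝓝 x)) ?_ ?_ ?_ ?_ hx
    · rintro _ ⟨a, t, rfl⟩
      have e1 : ∀ e : A, piRep ι α e * (piRep ι α a * lam t) * piRep ι α e
          = piRep ι α (e * a) * piRep ι α (α t e) * lam t := by
        intro e
        rw [← piRep_mul]
        simp only [mul_assoc]
        rw [lam_piRep ι hα]
      have hαt : ∀ e : A, a * α t e = α t (α t⁻¹ a * e) := by
        intro e
        rw [map_mul, ← hα.2, mul_inv_cancel, hα.1]
      have hmul : Tendsto (fun e => e * (a * α t e)) (CStarAlgebra.approximateUnit A) (𝓝 a) := by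
        have h1 : Tendsto (fun e => a * α t e) (CStarAlgebra.approximateUnit A) (𝓝 a) := by
          have h2 := hl.tendsto_mul_left (α t⁻¹ a)
          have h3 : Tendsto (α t) (𝓝 (α t⁻¹ a)) (𝓝 a) := by
            have : Continuous (α t) := (StarAlgEquiv.isometry (α t)).continuous
            have h4 := this.tendsto (α t⁻¹ a)
            rwa [← hα.2, mul_inv_cancel, hα.1] at h4
          simpa [Function.comp_def, hαt] using h3.comp h2
        have h2 := hl.tendsto_mul_right a
        rw [tendsto_iff_norm_sub_tendsto_zero] at h1 h2 ⊢
        refine squeeze_zero' (Eventually.of_forall fun _ => norm_nonneg _) ?_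
          (by simpa using h1.add h2)
        filter_upwards [hn] with e he
        calc ‖e * (a * α t e) - a‖ = ‖e * (a * α t e - a) + (e * a - a)‖ := by
              congr 1; rw [mul_sub]; abel
          _ ≤ ‖e‖ * ‖a * α t e - a‖ + ‖e * a - a‖ :=
              (norm_add_le _ _).trans (by gcongr; exact norm_mul_le _ _)
          _ ≤ 1 * ‖a * α t e - a‖ + ‖e * a - a‖ := by gcongr
          _ = _ := by rw [one_mul]
      have hc : Continuous (piRep ι α) :=
        (LinearMap.mkContinuous (piRepLin ι α) 1
          (fun a => by rw [one_mul]; exact piRep_norm_le ι α a)).continuous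
      have := ((hc.tendsto a).comp hmul).mul_const (lam (H := H) t)
      refine this.congr fun e => ?_
      rw [e1, piRep_mul, mul_assoc]; rfl
    · simp
    · intro x y _ _ h1 h2
      simpa [mul_add, add_mul] using h1.add h2
    · intro c x _ h
      simpa [mul_smul_comm, smul_mul_assoc] using h.const_smul c
  rw [Metric.tendsto_nhds]
  intro ε hε
  obtain ⟨y, hy, hxy⟩ := Metric.mem_closure_iff.1 (show x ∈ closure (AlgC ι α : Set _) from hx)
    (ε / 3) (by positivity)
  filter_upwards [hn, (Metric.tendsto_nhds.1 (hal y hy)) (ε / 3) (by positivity)] with e he h2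
  rw [dist_eq_norm] at *
  have h3 := hbd e he (x - y)
  have : piRep ι α e * x * piRep ι α e - x = piRep ι α e * (x - y) * piRep ι α e
      + (piRep ι α e * y * piRep ι α e - y) - (x - y) := by
    rw [mul_sub, sub_mul]; abel
  rw [this]
  have h4 := norm_sub_le (piRep ι α e * (x - y) * piRep ι α e
      + (piRep ι α e * y * piRep ι α e - y)) (x - y)
  have h5 := norm_add_le (piRep ι α e * (x - y) * piRep ι α e)
    (piRep ι α e * y * piRep ι α e - y)
  linarith

end P2
end

noncomputable section
open scoped ComplexOrder ENNReal
open Matrix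
set_option linter.all false
set_option linter.deprecated false

section P3
open Filter Topology
variable {K : Type*} [NormedAddCommGroup K] [InnerProductSpace ℂ K] [CompleteSpace K]
variable {ν : Type*} [Fintype ν] [DecidableEq ν]

theorem sum_diag_inner (a : K →L[ℂ] K) (x : PiLp 2 (fun _ : ν => K)) :
    ∑ p, ∑ q, inner ℂ (x p) ((Matrix.diagonal (fun _ : ν => a)) p q (x q))
      = ∑ p, inner ℂ (x p) (a (x p)) := by
  refine Finset.sum_congr rfl fun p _ => ?_
  rw [Finset.sum_eq_single p]
  · simp
  · intro q _ hq; simp [Matrix.diagonal_apply_ne' _ hq]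
  · simp

theorem pilp_norm_sq (x : PiLp 2 (fun _ : ν => K)) : ‖x‖ ^ 2 = ∑ p, ‖x p‖ ^ 2 := by
  rw [PiLp.norm_sq_eq_of_L2]

theorem block_sum (a d : Matrix ν ν (K →L[ℂ] K)) (X Y : Matrix ν ν (K →L[ℂ] K)) (ξ : ν ⊕ ν → K) :
    ∑ p, ∑ q, inner ℂ (ξ p) ((Matrix.fromBlocks a X Y d) p q (ξ q))
    = (∑ p, ∑ q, inner ℂ (ξ (.inl p)) (a p q (ξ (.inl q))))
      + (∑ p, ∑ q, inner ℂ (ξ (.inl p)) (X p q (ξ (.inr q))))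
      + (∑ p, ∑ q, inner ℂ (ξ (.inr p)) (Y p q (ξ (.inl q))))
      + (∑ p, ∑ q, inner ℂ (ξ (.inr p)) (d p q (ξ (.inr q)))) := by
  simp only [Fintype.sum_sum_type, Matrix.fromBlocks_apply₁₁, Matrix.fromBlocks_apply₁₂,
    Matrix.fromBlocks_apply₂₁, Matrix.fromBlocks_apply₂₂, Finset.sum_add_distrib]
  ring

theorem conj_sum (X : Matrix ν ν (K →L[ℂ] K)) (x y : ν → K) :
    ∑ p, ∑ q, inner ℂ (y p) (star (X q p) (x q))
      = (starRingEnd ℂ) (∑ p, ∑ q, inner ℂ (x p) (X p q (y q))) := by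
  simp only [map_sum, inner_conj_symm]
  rw [Finset.sum_comm]
  simp only [ContinuousLinearMap.star_eq_adjoint, ContinuousLinearMap.adjoint_inner_right]

theorem block_pos {D : K →L[ℂ] K} (hD : star D = D) (M : Matrix ν ν (K →L[ℂ] K)) (m : ℝ)
    (hm : ‖matOp M‖ ≤ m) :
    PosQ (Matrix.fromBlocks (Matrix.diagonal fun _ => (m : ℂ) • (D * D))
      (Matrix.of fun p q => D * M p q * D) (Matrix.of fun p q => D * star (M q p) * D)
      (Matrix.diagonal fun _ => (m : ℂ) • (D * D))) := by
  intro ξ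
  rw [block_sum]
  have hDi : ∀ u v : K, inner ℂ u (D v) = inner ℂ (D u) v := by
    intro u v
    rw [← ContinuousLinearMap.adjoint_inner_right, ← ContinuousLinearMap.star_eq_adjoint, hD]
  let x : PiLp 2 (fun _ : ν => K) := WithLp.toLp 2 fun p => D (ξ (.inl p))
  let y : PiLp 2 (fun _ : ν => K) := WithLp.toLp 2 fun p => D (ξ (.inr p))
  have hd : ∀ v : ν → K, ∑ p, ∑ q, inner ℂ (v p)
      ((Matrix.diagonal (fun _ : ν => (m : ℂ) • (D * D))) p q (v q))
      = ((m * ‖(WithLp.toLp 2 fun p => D (v p) : PiLp 2 (fun _ : ν => K))‖ ^ 2 : ℝ) : ℂ) := by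
    intro v
    have := sum_diag_inner ((m : ℂ) • (D * D)) (WithLp.toLp 2 v : PiLp 2 (fun _ : ν => K))
    rw [show _ = _ from this, pilp_norm_sq, Finset.mul_sum]
    push_cast
    refine Finset.sum_congr rfl fun p _ => ?_
    change inner ℂ (v p) ((m : ℂ) • D (D (v p))) = _
    rw [inner_smul_right, hDi, inner_self_eq_norm_sq_to_K]; rfl
  have hX : ∑ p, ∑ q, inner ℂ (ξ (.inl p)) ((Matrix.of fun p q => D * M p q * D) p q (ξ (.inr q)))
      = inner ℂ x (matOp M y) := by
    rw [inner_matOp]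
    simp only [Matrix.of_apply, ContinuousLinearMap.mul_apply, hDi]; rfl
  have hY : ∑ p, ∑ q, inner ℂ (ξ (.inr p))
      ((Matrix.of fun p q => D * star (M q p) * D) p q (ξ (.inl q)))
      = (starRingEnd ℂ) (inner ℂ x (matOp M y)) := by
    rw [inner_matOp, ← conj_sum]
    simp only [Matrix.of_apply, ContinuousLinearMap.mul_apply, hDi]; rfl
  rw [hX, hY, hd (fun p => ξ (.inl p)), hd (fun p => ξ (.inr p))]
  change 0 ≤ ((m * ‖x‖ ^ 2 : ℝ) : ℂ) + _ + _ + ((m * ‖y‖ ^ 2 : ℝ) : ℂ)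
  rw [add_assoc (((m * ‖x‖ ^ 2 : ℝ) : ℂ)), Complex.add_conj, ← Complex.ofReal_add, ← Complex.ofReal_add]
  refine Complex.zero_le_real.2 ?_
  have h1 : ‖inner ℂ x (matOp M y)‖ ≤ m * (‖x‖ * ‖y‖) := by
    refine (norm_inner_le_norm _ _).trans ?_
    have := (matOp M).le_of_opNorm_le hm y
    calc ‖x‖ * ‖matOp M y‖ ≤ ‖x‖ * (m * ‖y‖) := by gcongr
      _ = _ := by ring
  have h2 := (abs_le.1 ((Complex.abs_re_le_norm (inner ℂ x (matOp M y))).trans h1)).1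
  have hm0 : 0 ≤ m := (norm_nonneg _).trans hm
  nlinarith [mul_nonneg hm0 (sq_nonneg (‖x‖ - ‖y‖))]

theorem block_norm {a : K →L[ℂ] K} {X Y : Matrix ν ν (K →L[ℂ] K)} {c : ℝ}
    (h : PosQ (Matrix.fromBlocks (Matrix.diagonal fun _ => a) X Y (Matrix.diagonal fun _ => a)))
    (hc : ‖a‖ ≤ c) (x y : PiLp 2 (fun _ : ν => K)) :
    ‖inner ℂ x (matOp X y)‖ ≤ c * ‖x‖ * ‖y‖ := by
  have hc0 : 0 ≤ c := (norm_nonneg _).trans hc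
  have hY : ∀ p q, Y p q = star (X q p) := fun p q => (h.herm (.inl q) (.inr p)).symm
  set z := inner ℂ x (matOp X y) with hz
  have ha : ∀ v : PiLp 2 (fun _ : ν => K), (∑ p, inner ℂ (v p) (a (v p))).re ≤ c * ‖v‖ ^ 2 := by
    intro v
    rw [pilp_norm_sq, Finset.mul_sum, Complex.re_sum]
    refine Finset.sum_le_sum fun p _ => ?_
    refine (Complex.re_le_norm _).trans ((norm_inner_le_norm _ _).trans ?_)
    calc ‖v p‖ * ‖a (v p)‖ ≤ ‖v p‖ * (c * ‖v p‖) := by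
          gcongr; exact a.le_of_opNorm_le hc _
      _ = _ := by ring
  have key : ∀ t : ℝ, 0 ≤ (c * ‖z‖ ^ 2 * ‖x‖ ^ 2) * (t * t) + (-2 * ‖z‖ ^ 2) * t + c * ‖y‖ ^ 2 := by
    intro t
    let u : ℂ := -(t : ℂ) * z
    have h1 := h (Sum.elim (fun p => (u • x) p) (fun p => y p))
    rw [block_sum] at h1
    simp only [Sum.elim_inl, Sum.elim_inr, hY] at h1
    rw [sum_diag_inner a (u • x), sum_diag_inner a y, conj_sum X (fun p => (u • x) p) (fun p => y p),
      ← inner_matOp, inner_smul_left, ← hz] at h1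
    have h2 := (Complex.nonneg_iff.1 h1).1
    simp only [Complex.add_re, Complex.conj_re] at h2
    have h3 := ha (u • x)
    have h4 := ha y
    have h5 : ((starRingEnd ℂ) u * z).re = - t * ‖z‖ ^ 2 := by
      have : (starRingEnd ℂ) u * z = ((- t * ‖z‖ ^ 2 : ℝ) : ℂ) := by
        simp only [u, map_mul, map_neg, Complex.conj_ofReal]
        rw [mul_assoc, Complex.conj_mul']
        push_cast; ring
      rw [this, Complex.ofReal_re]
    have h6 : ‖u • x‖ ^ 2 = t * t * ‖z‖ ^ 2 * ‖x‖ ^ 2 := by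
      rw [norm_smul, norm_mul, norm_neg, Complex.norm_real, mul_pow, mul_pow, Real.norm_eq_abs, sq_abs]
      ring
    rw [h5] at h2
    rw [h6] at h3
    nlinarith
  have hd := discrim_le_zero key
  rw [discrim] at hd
  by_cases hz0 : ‖z‖ = 0
  · rw [hz0]; positivity
  have hzp : 0 < ‖z‖ := lt_of_le_of_ne (norm_nonneg _) (Ne.symm hz0)
  have h7 : ‖z‖ ^ 2 * ‖z‖ ^ 2 ≤ ‖z‖ ^ 2 * (c * ‖x‖ * ‖y‖) ^ 2 := by nlinarith
  have h8 := le_of_mul_le_mul_left h7 (by positivity)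
  exact le_of_sq_le_sq h8 (by positivity)

theorem opNorm_le_of_inner {T : K →L[ℂ] K} {c : ℝ} (hc : 0 ≤ c)
    (h : ∀ x y, ‖inner ℂ x (T y)‖ ≤ c * ‖x‖ * ‖y‖) : ‖T‖ ≤ c := by
  refine T.opNorm_le_bound hc fun y => ?_
  have h1 := h (T y) y
  rw [inner_self_eq_norm_sq_to_K, norm_pow] at h1
  simp at h1
  by_cases h0 : ‖T y‖ = 0
  · rw [h0]; positivity
  have hp : 0 < ‖T y‖ := lt_of_le_of_ne (norm_nonneg _) (Ne.symm h0)
  nlinarith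

end P3

section P3b
open Filter Topology
variable {H : Type*} [NormedAddCommGroup H] [InnerProductSpace ℂ H] [CompleteSpace H]
variable {A : Type*} [NonUnitalCStarAlgebra A] {G : Type*} [Group G]
variable (ι : A →⋆ₙₐ[ℂ] (H →L[ℂ] H)) (α : G → A ≃⋆ₐ[ℂ] A)

/-- complete positivity on `CrC` via quadratic forms -/
def CPB (Φ : (lp (fun _ : G => H) 2 →L[ℂ] lp (fun _ : G => H) 2) →ₗ[ℂ]
         (lp (fun _ : G => H) 2 →L[ℂ] lp (fun _ : G => H) 2)) : Prop :=
  ∀ (n : ℕ) (M : Matrix (Fin n) (Fin n)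
      (lp (fun _ : G => H) 2 →L[ℂ] lp (fun _ : G => H) 2)),
    (∀ i j, M i j ∈ CrC ι α) → PosQ M → PosQ (M.map Φ)

variable {ι α}
variable {Φ : (lp (fun _ : G => H) 2 →L[ℂ] lp (fun _ : G => H) 2) →ₗ[ℂ]
         (lp (fun _ : G => H) 2 →L[ℂ] lp (fun _ : G => H) 2)}

theorem CPOnCrossed.cpb (h : CPOnCrossed ι α Φ) : CPB ι α Φ :=
  fun n M hM hp => (h.2 n M hM hp.matPos).posQ

theorem CPB.cp (h : CPB ι α Φ) (h2 : ∀ x ∈ CrossedSet ι α, Φ x ∈ CrossedSet ι α) :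
    CPOnCrossed ι α Φ :=
  ⟨h2, fun n M hM hp => (h n M hM hp.posQ).matPos⟩

theorem CPB.gen (h : CPB ι α Φ) {ν : Type*} [Fintype ν] {M : Matrix ν ν
      (lp (fun _ : G => H) 2 →L[ℂ] lp (fun _ : G => H) 2)} (hM : ∀ i j, M i j ∈ CrC ι α)
    (hp : PosQ M) : PosQ (M.map Φ) := by
  have e := (Fintype.equivFin ν).symm
  rw [← PosQ.reindex e] at hp ⊢
  exact h _ _ (fun i j => hM _ _) hp

theorem tendsto_phi {C : ℝ} (hC : ∀ x ∈ CrC ι α, ‖Φ x‖ ≤ C * ‖x‖) {I : Type*} {l : Filter I}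
    {u : I → _} {x} (hx : x ∈ CrC ι α) (hu : ∀ i, u i ∈ CrC ι α) (h : Tendsto u l (𝓝 x)) :
    Tendsto (fun i => Φ (u i)) l (𝓝 (Φ x)) := by
  rw [tendsto_iff_norm_sub_tendsto_zero] at h ⊢
  refine squeeze_zero (fun _ => norm_nonneg _) (fun i => ?_) (by simpa using h.const_mul C)
  rw [← map_sub]
  exact hC _ (sub_mem (hu i) hx)

variable (hα : IsAction α)
include hα

theorem cp_block (h : CPB ι α Φ) {ν : Type*} [Fintype ν] [DecidableEq ν] {M : Matrix ν ν
      (lp (fun _ : G => H) 2 →L[ℂ] lp (fun _ : G => H) 2)} (hM : ∀ i j, M i j ∈ CrC ι α)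
    {e : A} (he : star e = e) :
    PosQ (Matrix.fromBlocks (Matrix.diagonal fun _ => ((‖matOp M‖ : ℝ) : ℂ) • Φ (piRep ι α (e * e)))
      (Matrix.of fun p q => Φ (piRep ι α e * M p q * piRep ι α e))
      (Matrix.of fun p q => Φ (piRep ι α e * star (M q p) * piRep ι α e))
      (Matrix.diagonal fun _ => ((‖matOp M‖ : ℝ) : ℂ) • Φ (piRep ι α (e * e)))) := by
  have h1 := block_pos (D := piRep ι α e) (by rw [piRep_star, he]) M ‖matOp M‖ le_rfl
  have h2 := h.gen ?_ h1
  · generalize ((‖matOp M‖ : ℝ) : ℂ) = c at h2 ⊢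
    convert h2 using 1
    ext1 p q
    rcases p with p | p <;> rcases q with q | q <;> simp [Matrix.diagonal_apply, piRep_mul]
    all_goals split_ifs <;> simp
  · intro p q
    have hpi : (((‖matOp M‖ : ℝ) : ℂ) • (piRep ι α e * piRep ι α e)) ∈ CrC ι α := by
      rw [piRep_mul]
      exact Submodule.smul_mem _ _ (AlgC_le ι α (pi_mem ι α _))
    rcases p with p | p <;> rcases q with q | q <;> simp [Matrix.diagonal_apply]
    · split_ifs
      · exact hpi
      · exact zero_mem _
    · exact CrC_conj ι hα (hM _ _) e
    · exact CrC_conj ι hα (CrC_star ι hα (hM _ _)) e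
    · split_ifs
      · exact hpi
      · exact zero_mem _

theorem cb_of_cp (h : CPB ι α Φ) {C : ℝ} (hC : ∀ x ∈ CrC ι α, ‖Φ x‖ ≤ C * ‖x‖)
    {c : ℝ} (hc0 : 0 ≤ c)
    (hc : ∀ e : A, star e = e → ‖e‖ ≤ 1 → ‖Φ (piRep ι α (e * e))‖ ≤ c)
    {ν : Type*} [Fintype ν] {M : Matrix ν ν
      (lp (fun _ : G => H) 2 →L[ℂ] lp (fun _ : G => H) 2)} (hM : ∀ i j, M i j ∈ CrC ι α) :
    ‖matOp (M.map Φ)‖ ≤ c * ‖matOp M‖ := by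
  classical
  obtain ⟨l, hl, hl1, hl2⟩ := exists_approx ι hα
  refine opNorm_le_of_inner (by positivity) fun x y => ?_
  have ht : Tendsto (fun e => inner ℂ x (matOp
      (Matrix.of fun p q => Φ (piRep ι α e * M p q * piRep ι α e)) y)) l
      (𝓝 (inner ℂ x (matOp (M.map Φ) y))) := by
    simp only [inner_matOp, Matrix.of_apply, Matrix.map_apply]
    refine tendsto_finset_sum _ fun p _ => tendsto_finset_sum _ fun q _ => ?_
    have h1 := tendsto_phi hC (hM p q) (fun e => CrC_conj ι hα (hM p q) e) (hl2 _ (hM p q))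
    have h2 : Continuous fun T : lp (fun _ : G => H) 2 →L[ℂ] lp (fun _ : G => H) 2 =>
        inner ℂ (x p) (T (y q)) := by fun_prop
    exact (h2.tendsto _).comp h1
  refine le_of_tendsto ht.norm ?_
  filter_upwards [hl1] with e he
  refine block_norm (cp_block hα h hM he.1) ?_ x y
  rw [norm_smul, Complex.norm_real, Real.norm_eq_abs, abs_of_nonneg (norm_nonneg _), mul_comm]
  gcongr
  exact hc e he.1 he.2

theorem herm_of_cp (h : CPB ι α Φ) {C : ℝ} (hC : ∀ x ∈ CrC ι α, ‖Φ x‖ ≤ C * ‖x‖)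
    {x} (hx : x ∈ CrC ι α) : Φ (star x) = star (Φ x) := by
  obtain ⟨l, hl, hl1, hl2⟩ := exists_approx ι hα
  have hs := CrC_star ι hα hx
  have h1 := tendsto_phi hC hx (fun e => CrC_conj ι hα hx e) (hl2 _ hx)
  have h2 := tendsto_phi hC hs (fun e => CrC_conj ι hα hs e) (hl2 _ hs)
  refine tendsto_nhds_unique h2 ((h1.star).congr' ?_)
  filter_upwards [hl1] with e he
  have := (cp_block hα h (M := Matrix.of fun (_ _ : Unit) => x) (fun _ _ => hx) he.1).herm
    (.inl ()) (.inr ())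
  simpa using this

end P3b
end

noncomputable section
open scoped ComplexOrder ENNReal
open Matrix
set_option linter.all false
set_option linter.deprecated false

section P4a
variable {K : Type*} [NormedAddCommGroup K] [InnerProductSpace ℂ K] [CompleteSpace K]
variable {A : Type*} [NonUnitalCStarAlgebra A]
variable {n : Type*} [Fintype n]

theorem matOp_ext_inner {S T : PiLp 2 (fun _ : n => K) →L[ℂ] PiLp 2 (fun _ : n => K)}
    (h : ∀ x i, S x i = T x i) : S = T := by
  ext x i; exact h x i

theorem matOp_add (M N : Matrix n n (K →L[ℂ] K)) : matOp (M + N) = matOp M + matOp N := by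
  refine matOp_ext_inner fun x i => ?_
  simp [matOp_apply, Finset.sum_add_distrib]

theorem matOp_smul (c : ℂ) (M : Matrix n n (K →L[ℂ] K)) : matOp (c • M) = c • matOp M := by
  refine matOp_ext_inner fun x i => ?_
  simp [matOp_apply, Finset.smul_sum]

theorem matOp_mul (M N : Matrix n n (K →L[ℂ] K)) : matOp (M * N) = matOp M * matOp N := by
  refine matOp_ext_inner fun x i => ?_
  simp only [matOp_apply, Matrix.mul_apply, ContinuousLinearMap.mul_apply, map_sum,
    ContinuousLinearMap.sum_apply]
  rw [Finset.sum_comm]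

theorem matOp_star (M : Matrix n n (K →L[ℂ] K)) : matOp (Mᴴ) = star (matOp M) := by
  rw [ContinuousLinearMap.star_eq_adjoint, ContinuousLinearMap.eq_adjoint_iff]
  intro x y
  rw [inner_matOp, PiLp.inner_apply]
  simp only [matOp_apply, sum_inner, Matrix.conjTranspose_apply,
    ContinuousLinearMap.star_eq_adjoint, ContinuousLinearMap.adjoint_inner_left]
  rw [Finset.sum_comm]

/-- matrix amplification of a representation -/
def ampHom (ρ : A →⋆ₙₐ[ℂ] (K →L[ℂ] K)) :
    CStarMatrix n n A →⋆ₙₐ[ℂ] (PiLp 2 (fun _ : n => K) →L[ℂ] PiLp 2 (fun _ : n => K)) where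
  toFun M := matOp (Matrix.of fun i j => ρ (M i j))
  map_smul' c M := by
    rw [show (Matrix.of fun i j => ρ ((c • M) i j)) = c • (Matrix.of fun i j => ρ (M i j)) from by
      ext i j; simp, matOp_smul]; rfl
  map_zero' := by
    refine matOp_ext_inner fun x i => ?_
    simp [matOp_apply]
  map_add' M N := by
    rw [← matOp_add]; congr 1; ext i j; simp
  map_mul' M N := by
    rw [← matOp_mul]; congr 1; ext i j; simp [CStarMatrix.mul_apply, Matrix.mul_apply]
  map_star' M := by
    rw [← matOp_star]; congr 1; ext i j
    simp [CStarMatrix.star_apply, Matrix.conjTranspose_apply, map_star]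

theorem amp_norm_le {L : Type*} [NormedAddCommGroup L] [InnerProductSpace ℂ L] [CompleteSpace L]
    (ρ : A →⋆ₙₐ[ℂ] (K →L[ℂ] K)) (σ : A →⋆ₙₐ[ℂ] (L →L[ℂ] L)) (hρ : Function.Injective ρ)
    (M : Matrix n n A) : ‖matOp (M.map σ)‖ ≤ ‖matOp (M.map ρ)‖ := by
  classical
  have h1 : Function.Injective (ampHom (n := n) ρ) := by
    rw [injective_iff_map_eq_zero]
    intro M hM
    ext i j
    apply hρ
    rw [CStarMatrix.zero_apply, map_zero]
    ext v
    have : ampHom ρ M (WithLp.toLp 2 (Pi.single j v)) i = 0 := by rw [hM]; rfl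
    have h2 : ampHom ρ M (WithLp.toLp 2 (Pi.single j v)) i = ρ (M i j) v := by
      change matOp _ _ i = _
      rw [matOp_apply, Finset.sum_eq_single j]
      · simp
      · intro q _ hq; simp [hq]
      · simp
    rw [← h2, this]; rfl
  letI := CStarAlgebra.spectralOrder A
  haveI := CStarAlgebra.spectralOrderedRing A
  have h2 := NonUnitalStarAlgHom.norm_map (ampHom (n := n) ρ) h1 (CStarMatrix.ofMatrix M)
  have h3 := NonUnitalStarAlgHom.norm_apply_le (ampHom (n := n) σ) (CStarMatrix.ofMatrix M)
  rw [← h2] at h3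
  exact h3

theorem matOp_one_norm_le (T : K →L[ℂ] K) (M : Matrix (Fin 1) (Fin 1) (K →L[ℂ] K))
    (h : M 0 0 = T) : ‖matOp M‖ = ‖T‖ := by
  apply le_antisymm
  · refine ContinuousLinearMap.opNorm_le_bound _ (norm_nonneg _) fun x => ?_
    have h1 : ∀ x : PiLp 2 (fun _ : Fin 1 => K), ‖x‖ = ‖x 0‖ := fun x => by
      rw [PiLp.norm_eq_of_L2]; simp
    rw [h1, h1 x, matOp_apply]
    simp [h, T.le_opNorm]
  · refine ContinuousLinearMap.opNorm_le_bound _ (norm_nonneg _) fun x => ?_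
    have h1 : ∀ x : PiLp 2 (fun _ : Fin 1 => K), ‖x‖ = ‖x 0‖ := fun x => by
      rw [PiLp.norm_eq_of_L2]; simp
    have := (matOp M).le_opNorm (WithLp.toLp 2 fun _ => x)
    rw [h1, h1, matOp_apply] at this
    simpa [h] using this
end P4a

section P4b
open Filter Topology
variable {H : Type*} [NormedAddCommGroup H] [InnerProductSpace ℂ H] [CompleteSpace H]
variable {A : Type*} [NonUnitalCStarAlgebra A] {G : Type*} [Group G]

/-- matrix entries -/
def ent (x : lp (fun _ : G => H) 2 →L[ℂ] lp (fun _ : G => H) 2) (s t : G) : H →L[ℂ] H :=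
  lpEval s ∘L x ∘L lpSingle t

theorem ent_apply (x : lp (fun _ : G => H) 2 →L[ℂ] lp (fun _ : G => H) 2) (s t : G) (v : H) :
    ent x s t v = (x (lpSingle t v)) s := rfl

/-- entry as a linear map -/
def entL (s t : G) : (lp (fun _ : G => H) 2 →L[ℂ] lp (fun _ : G => H) 2) →ₗ[ℂ] (H →L[ℂ] H) where
  toFun x := ent x s t
  map_add' x y := by ext v; simp [ent]
  map_smul' c x := by ext v; simp [ent]

theorem entL_apply (x : lp (fun _ : G => H) 2 →L[ℂ] lp (fun _ : G => H) 2) (s t : G) :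
    entL s t x = ent x s t := rfl

theorem ent_norm (x : lp (fun _ : G => H) 2 →L[ℂ] lp (fun _ : G => H) 2) (s t : G) :
    ‖ent x s t‖ ≤ ‖x‖ := by
  refine ContinuousLinearMap.opNorm_le_bound _ (norm_nonneg _) fun v => ?_
  rw [ent_apply]
  refine (lpEval_norm _ _).trans ((x.le_opNorm _).trans ?_)
  gcongr
  exact lpSingle_norm _ _

theorem ent_cont (s t : G) :
    Continuous fun x : lp (fun _ : G => H) 2 →L[ℂ] lp (fun _ : G => H) 2 => ent x s t :=
  AddMonoidHomClass.continuous_of_bound (entL (H := H) s t) 1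
    (fun x => by rw [one_mul]; exact ent_norm x s t)

theorem lam_lpSingle (u t : G) (v : H) :
    lam u (lpSingle t v) = (lpSingle (u * t) v : lp (fun _ : G => H) 2) := by
  apply lp.ext; funext r
  rw [lam_apply]
  by_cases h : r = u * t
  · subst h; rw [lpSingle_self, inv_mul_cancel_left, lpSingle_self]
  · rw [lpSingle_ne h, lpSingle_ne]
    intro h2; apply h; rw [← h2]; simp

theorem ent_mul_lam (x : lp (fun _ : G => H) 2 →L[ℂ] lp (fun _ : G => H) 2) (u s t : G) :
    ent (x * lam u) s t = ent x s (u * t) := by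
  ext v
  simp only [ent_apply, ContinuousLinearMap.mul_apply, lam_lpSingle]

theorem op_ext {x y : lp (fun _ : G => H) 2 →L[ℂ] lp (fun _ : G => H) 2}
    (h : ∀ s t, ent x s t = ent y s t) : x = y := by
  classical
  ext f : 1
  have h0 := lp.hasSum_single (p := 2) (E := fun _ : G => H) (by norm_num) f
  have h1 := h0.mapL x
  have h2 := h0.mapL y
  refine h1.unique ?_
  convert h2 using 2 with t
  apply lp.ext; funext s
  exact congrArg (fun T : H →L[ℂ] H => T (f t)) (h s t)

variable (ι : A →⋆ₙₐ[ℂ] (H →L[ℂ] H)) (α : G → A ≃⋆ₐ[ℂ] A)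

theorem ent_pi_same (a : A) (s : G) : ent (piRep ι α a) s s = ι (α s⁻¹ a) := by
  ext v
  rw [ent_apply, piRep_apply, lpSingle_self]

theorem ent_pi_ne (a : A) {s t : G} (h : s ≠ t) : ent (piRep ι α a) s t = 0 := by
  ext v
  rw [ent_apply, piRep_apply, lpSingle_ne h]; simp

theorem ent_gen_same (a : A) {r s t : G} (h : s = r * t) :
    ent (piRep ι α a * lam r) s t = ι (α s⁻¹ a) := by
  rw [ent_mul_lam, ← h, ent_pi_same]

theorem ent_gen_ne (a : A) {r s t : G} (h : s ≠ r * t) :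
    ent (piRep ι α a * lam r) s t = 0 := by
  rw [ent_mul_lam, ent_pi_ne ι α a h]

theorem ent_diag (hisom : ∀ a : A, ‖ι a‖ = ‖a‖) (hα : IsAction α) {x} (hx : x ∈ CrC ι α) :
    ∃ a : A, ∀ r, ι (α r⁻¹ a) = ent x r r := by
  have hiso : Isometry ι := AddMonoidHomClass.isometry_of_norm ι hisom
  have halg : ∀ y ∈ AlgC ι α, ∃ a : A, ∀ r, ι (α r⁻¹ a) = ent y r r := by
    intro y hy
    refine Submodule.span_induction (p := fun y _ => ∃ a : A, ∀ r, ι (α r⁻¹ a) = ent y r r)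
      ?_ ?_ ?_ ?_ hy
    · rintro _ ⟨a, t, rfl⟩
      by_cases ht : t = 1
      · subst ht
        exact ⟨a, fun r => (ent_gen_same ι α a (by simp)).symm⟩
      · refine ⟨0, fun r => ?_⟩
        rw [ent_gen_ne ι α a (by simpa using ht)]; simp
    · exact ⟨0, fun r => by rw [map_zero, map_zero]; exact ((entL (H := H) r r).map_zero).symm⟩
    · rintro y z _ _ ⟨a, ha⟩ ⟨b, hb⟩
      refine ⟨a + b, fun r => ?_⟩
      rw [map_add, map_add, ha, hb]; exact ((entL r r).map_add y z).symm
    · rintro c y _ ⟨a, ha⟩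
      refine ⟨c • a, fun r => ?_⟩
      rw [map_smul, map_smul, ha]; exact ((entL r r).map_smul c y).symm
  obtain ⟨u, hu, hux⟩ := CrC_seq ι α hx
  choose a ha using fun n => halg (u n) (hu n)
  have h1 : ∀ r, Tendsto (fun n => ι (α r⁻¹ (a n))) atTop (𝓝 (ent x r r)) := by
    intro r
    simp only [ha]
    exact ((ent_cont r r).tendsto x).comp hux
  have h2 : CauchySeq a := by
    have := (h1 1).cauchySeq
    simp only [inv_one, hα.1] at this
    refine hiso.isUniformInducing.cauchy_map_iff.1 ?_
    rw [Filter.map_map]; exact this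
  obtain ⟨b, hb⟩ := cauchySeq_tendsto_of_complete h2
  refine ⟨b, fun r => tendsto_nhds_unique ?_ (h1 r)⟩
  have hc : Continuous (α r⁻¹) := (StarAlgEquiv.isometry (α r⁻¹)).continuous
  exact ((hiso.continuous.comp hc).tendsto b).comp hb

/-- `E` implements the conditional expectation -/
def CE (E : (lp (fun _ : G => H) 2 →L[ℂ] lp (fun _ : G => H) 2) →ₗ[ℂ] A) : Prop :=
  ∀ x ∈ CrC ι α, ∀ r, ι (α r⁻¹ (E x)) = ent x r r

theorem exists_CE (hisom : ∀ a : A, ‖ι a‖ = ‖a‖) (hα : IsAction α) : ∃ E, CE ι α E := by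
  have hinj : Function.Injective ι := (AddMonoidHomClass.isometry_of_norm ι hisom).injective
  obtain ⟨g, hg⟩ := LinearMap.exists_leftInverse_of_injective (iotaLin ι)
    (LinearMap.ker_eq_bot.2 hinj)
  refine ⟨g ∘ₗ entL 1 1, fun x hx r => ?_⟩
  obtain ⟨a, ha⟩ := ent_diag ι α hisom hα hx
  have : (g ∘ₗ entL 1 1) x = a := by
    change g (ent x 1 1) = a
    rw [← ha 1, inv_one, hα.1]
    exact LinearMap.congr_fun hg a
  rw [this, ha]

end P4b
end

noncomputable section
open scoped ComplexOrder ENNReal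
open Matrix
set_option linter.all false
set_option linter.deprecated false

theorem sum_expand {K : Type*} [NormedAddCommGroup K] [InnerProductSpace ℂ K]
    {ν σ : Type*} [Fintype ν] [Fintype σ] (M : Matrix ν ν (K →L[ℂ] K)) (z : ν → σ → K) :
    ∑ i, ∑ j, inner ℂ (∑ s, z i s) (M i j (∑ t, z j t))
      = ∑ p : ν × σ, ∑ q : ν × σ, inner ℂ (z p.1 p.2) (M p.1 q.1 (z q.1 q.2)) := by
  simp only [Fintype.sum_prod_type, sum_inner, inner_sum, map_sum]
  refine Finset.sum_congr rfl fun i _ => ?_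
  symm
  rw [Finset.sum_comm]
  refine Finset.sum_congr rfl fun j _ => ?_
  rw [Finset.sum_comm]

section P5
open Filter Topology
variable {H : Type*} [NormedAddCommGroup H] [InnerProductSpace ℂ H] [CompleteSpace H]
variable {A : Type*} [NonUnitalCStarAlgebra A] {G : Type*} [Group G]
variable {ι : A →⋆ₙₐ[ℂ] (H →L[ℂ] H)} {α : G → A ≃⋆ₐ[ℂ] A}
variable {Φ : (lp (fun _ : G => H) 2 →L[ℂ] lp (fun _ : G => H) 2) →ₗ[ℂ]
         (lp (fun _ : G => H) 2 →L[ℂ] lp (fun _ : G => H) 2)}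
variable {E : (lp (fun _ : G => H) 2 →L[ℂ] lp (fun _ : G => H) 2) →ₗ[ℂ] A}

theorem CE.ent (hE : CE ι α E) (hα : IsAction α) {x} (hx : x ∈ CrC ι α) (s t : G) :
    ent x s t = ι (α s⁻¹ (E (x * lam (t * s⁻¹)))) := by
  rw [hE _ (CrC_lam ι hα hx _), ent_mul_lam, inv_mul_cancel_right]

theorem CE.one (hE : CE ι α E) (hα : IsAction α) {x} (hx : x ∈ CrC ι α) :
    ι (E x) = _root_.ent x 1 1 := by
  rw [← hE x hx 1, inv_one, hα.1]

theorem CE.norm (hE : CE ι α E) (hα : IsAction α) (hisom : ∀ a : A, ‖ι a‖ = ‖a‖)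
    {x} (hx : x ∈ CrC ι α) : ‖E x‖ ≤ ‖x‖ := by
  rw [← hisom, hE.one hα hx]; exact ent_norm _ _ _

theorem CE.pi (hE : CE ι α E) (hα : IsAction α) (hisom : ∀ a : A, ‖ι a‖ = ‖a‖) (a : A) :
    E (piRep ι α a) = a := by
  have hinj : Function.Injective ι := (AddMonoidHomClass.isometry_of_norm ι hisom).injective
  apply hinj
  rw [hE.one hα (AlgC_le _ _ (pi_mem ι α a)), ent_pi_same, inv_one, hα.1]

theorem CE.gen (hE : CE ι α E) (hα : IsAction α) (hisom : ∀ a : A, ‖ι a‖ = ‖a‖) (a : A)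
    {r : G} (hr : r ≠ 1) : E (piRep ι α a * lam r) = 0 := by
  have hinj : Function.Injective ι := (AddMonoidHomClass.isometry_of_norm ι hisom).injective
  apply hinj
  rw [hE.one hα (AlgC_le _ _ (gen_mem ι α a r)), ent_gen_ne, map_zero]
  simpa using hr.symm

variable (ι α Φ E)
/-- multiplier of a map -/
def mulF (s : G) : A →ₗ[ℂ] A :=
  E ∘ₗ (LinearMap.mulRight ℂ (lam s⁻¹)) ∘ₗ Φ ∘ₗ
    (LinearMap.mulRight ℂ (lam (H := H) s)) ∘ₗ piRepLin ι α

/-- the associated map -/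
def mulS (T : Finset G) : (lp (fun _ : G => H) 2 →L[ℂ] lp (fun _ : G => H) 2) →ₗ[ℂ]
         (lp (fun _ : G => H) 2 →L[ℂ] lp (fun _ : G => H) 2) :=
  ∑ s ∈ T, (LinearMap.mulRight ℂ (lam (H := H) s)) ∘ₗ piRepLin ι α ∘ₗ mulF ι α Φ E s ∘ₗ
    E ∘ₗ (LinearMap.mulRight ℂ (lam s⁻¹))

theorem mulF_apply (s : G) (a : A) :
    mulF ι α Φ E s a = E (Φ (piRep ι α a * lam s) * lam s⁻¹) := rfl

theorem mulS_apply (T : Finset G) (x) :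
    mulS ι α Φ E T x = ∑ s ∈ T, piRep ι α (mulF ι α Φ E s (E (x * lam s⁻¹))) * lam s := by
  simp only [mulS, LinearMap.sum_apply]; rfl
variable {ι α Φ E}

variable (hE : CE ι α E) (hα : IsAction α) (hisom : ∀ a : A, ‖ι a‖ = ‖a‖)
  (hmap : ∀ x ∈ CrC ι α, Φ x ∈ CrC ι α) (T : Finset G) (hT : ∀ s ∉ T, mulF ι α Φ E s = 0)

include hT in
theorem ent_mulS (x) (s t : G) : ent (mulS ι α Φ E T x) s t
    = ι (α s⁻¹ (mulF ι α Φ E (s * t⁻¹) (E (x * lam (t * s⁻¹))))) := by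
  rw [mulS_apply, ← entL_apply, map_sum]
  simp only [entL_apply]
  have h0 : (s * t⁻¹)⁻¹ = t * s⁻¹ := by group
  by_cases h : s * t⁻¹ ∈ T
  · rw [Finset.sum_eq_single_of_mem _ h, ent_gen_same ι α _ (by group), h0]
    intro r _ hr
    refine ent_gen_ne ι α _ ?_
    rintro rfl; exact hr (by group)
  · rw [hT _ h, Finset.sum_eq_zero]
    · simp
    intro r hr
    refine ent_gen_ne ι α _ ?_
    rintro rfl; exact h (by simpa using hr)

include hT hmap hE hα in
theorem ent_mulS' (x) (s t : G) : ent (mulS ι α Φ E T x) s t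
    = ent (Φ (piRep ι α (E (x * lam (t * s⁻¹))) * lam (s * t⁻¹))) s t := by
  rw [ent_mulS T hT, hE.ent hα (hmap _ (AlgC_le _ _ (gen_mem ι α _ _))), mulF_apply]
  have h0 : (s * t⁻¹)⁻¹ = t * s⁻¹ := by group
  rw [h0]

include hE hα hisom hT in
theorem mulS_gen : HSGenProp ι α (mulF ι α Φ E) (mulS ι α Φ E T) := by
  intro a s
  refine op_ext fun p q => ?_
  rw [ent_mulS T hT, mul_assoc, lam_mul]
  by_cases h : p = s * q
  · have h1 : s * (q * p⁻¹) = 1 := by subst h; group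
    have h2 : p * q⁻¹ = s := by subst h; group
    rw [ent_gen_same ι α _ h, h1, lam_one, mul_one, hE.pi hα hisom, h2]
  · rw [ent_gen_ne ι α _ h, hE.gen hα hisom]
    · simp
    · intro h1; apply h
      have : p = (s * (q * p⁻¹)) * p := by rw [h1, one_mul]
      rw [this]; simp [mul_assoc]

theorem mulS_mem (x) : mulS ι α Φ E T x ∈ AlgC ι α := by
  rw [mulS_apply]
  exact Submodule.sum_mem _ fun s _ => gen_mem ι α _ _

/-- the auxiliary positive matrix -/
def auxQ (ι : A →⋆ₙₐ[ℂ] (H →L[ℂ] H)) (α : G → A ≃⋆ₐ[ℂ] A)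
    (E : (lp (fun _ : G => H) 2 →L[ℂ] lp (fun _ : G => H) 2) →ₗ[ℂ] A) {n : ℕ}
    (M : Matrix (Fin n) (Fin n) (lp (fun _ : G => H) 2 →L[ℂ] lp (fun _ : G => H) 2))
    (T' : Finset G) : Matrix (Fin n × T') (Fin n × T')
      (lp (fun _ : G => H) 2 →L[ℂ] lp (fun _ : G => H) 2) :=
  Matrix.of fun p q => piRep ι α (E (M p.1 q.1 * lam ((q.2 : G) * (p.2 : G)⁻¹)))
    * lam ((p.2 : G) * (q.2 : G)⁻¹)

include hE hα in
theorem auxQ_pos {n : ℕ} {M : Matrix (Fin n) (Fin n)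
      (lp (fun _ : G => H) 2 →L[ℂ] lp (fun _ : G => H) 2)} (hM : ∀ i j, M i j ∈ CrC ι α)
    (hp : PosQ M) (T' : Finset G) : PosQ (auxQ ι α E M T') := by
  intro η
  have key : ∀ p q : Fin n × T', HasSum (fun v : G => inner ℂ
      (lpSingle ((p.2 : G) * v) (η p ((p.2 : G) * v)))
        (M p.1 q.1 (lpSingle ((q.2 : G) * v) (η q ((q.2 : G) * v)))))
      (inner ℂ (η p) (auxQ ι α E M T' p q (η q))) := by
    intro p q
    have h1 := lp.hasSum_inner (𝕜 := ℂ) (η p) (auxQ ι α E M T' p q (η q))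
    rw [← (Equiv.mulLeft (p.2 : G)).hasSum_iff] at h1
    refine Eq.mp (congrArg (fun f => HasSum f _) (funext fun v => ?_)) h1
    symm
    simp only [Function.comp, Equiv.coe_mulLeft]
    rw [lpSingle_inner]
    congr 1
    change _ = ι (α _ (E _)) (η q _)
    rw [hE _ (CrC_lam ι hα (hM _ _) _), ent_mul_lam, ent_apply]
    have h2 : (q.2 : G) * (p.2 : G)⁻¹ * ((p.2 : G) * v) = q.2 * v := by group
    have h3 : ((p.2 : G) * (q.2 : G)⁻¹)⁻¹ * ((p.2 : G) * v) = q.2 * v := by group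
    rw [h2, h3]
  have h2 := hasSum_sum (s := Finset.univ) fun p _ =>
    hasSum_sum (s := Finset.univ) fun q _ => key p q
  refine h2.nonneg fun v => ?_
  have h3 := hp (fun i => ∑ s : T', lpSingle ((s : G) * v) (η (i, s) ((s : G) * v)))
  exact h3.trans_eq (sum_expand M (fun i (s : T') => lpSingle ((s : G) * v) (η (i, s) ((s : G) * v))))

include hE hα hT hmap in
theorem mulS_cp (h : CPB ι α Φ) : CPB ι α (mulS ι α Φ E T) := by
  classical
  intro n M hM hp ξ
  let z : Finset G → Fin n → lp (fun _ : G => H) 2 := fun T' i => ∑ s : T', lpSingle (s : G) (ξ i s)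
  have hz : ∀ i, Tendsto (fun T' => z T' i) atTop (𝓝 (ξ i)) := by
    intro i
    have h0 := lp.hasSum_single (p := 2) (E := fun _ : G => H) (by norm_num) (ξ i)
    refine Tendsto.congr (fun T' => ?_) h0
    exact (Finset.sum_coe_sort T' (fun s => (lpSingle s (ξ i s) : lp (fun _ : G => H) 2))).symm
  have hlim : Tendsto (fun T' => ∑ p, ∑ q, inner ℂ (z T' p) ((M.map (mulS ι α Φ E T)) p q (z T' q)))
      atTop (𝓝 (∑ p, ∑ q, inner ℂ (ξ p) ((M.map (mulS ι α Φ E T)) p q (ξ q)))) :=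
    tendsto_finsetSum _ fun p _ => tendsto_finsetSum _ fun q _ =>
      (hz p).inner (((M.map (mulS ι α Φ E T) p q).continuous.tendsto _).comp (hz q))
  refine ge_of_tendsto' hlim fun T' => ?_
  rw [sum_expand (M.map (mulS ι α Φ E T)) (fun i (s : T') => lpSingle (s : G) (ξ i s))]
  have h1 := h.gen (M := auxQ ι α E M T') (fun p q => AlgC_le _ _ (gen_mem ι α _ _))
    (auxQ_pos hE hα hM hp T') (fun p => lpSingle (p.2 : G) (ξ p.1 p.2))
  refine h1.trans_eq ?_
  refine Finset.sum_congr rfl fun p _ => Finset.sum_congr rfl fun q _ => ?_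
  rw [lpSingle_inner, lpSingle_inner]
  congr 1
  simp only [Matrix.map_apply]
  rw [← ent_apply, ← ent_apply, ent_mulS' hE hα hmap T hT]
  rfl

variable (hc : ∀ x ∈ CrC ι α, ‖Φ x‖ ≤ ‖x‖)

include hE hα hisom hmap hc in
theorem mulF_norm (s : G) (a : A) : ‖mulF ι α Φ E s a‖ ≤ ‖a‖ := by
  rw [mulF_apply]
  have h0 := AlgC_le _ _ (gen_mem ι α a s)
  refine (hE.norm hα hisom (CrC_lam ι hα (hmap _ h0) _)).trans ?_
  calc _ ≤ ‖Φ (piRep ι α a * lam s)‖ * ‖lam (H := H) s⁻¹‖ := norm_mul_le _ _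
    _ ≤ ‖piRep ι α a * lam s‖ * 1 := mul_le_mul (hc _ h0) (lam_norm_le _) (norm_nonneg _) (norm_nonneg _)
    _ ≤ ‖piRep ι α a‖ * ‖lam (H := H) s‖ := by rw [mul_one]; exact norm_mul_le _ _
    _ ≤ ‖a‖ * 1 := mul_le_mul (piRep_norm_le _ _ _) (lam_norm_le _) (norm_nonneg _) (norm_nonneg _)
    _ = ‖a‖ := mul_one _

include hE hα hisom hmap in
theorem mulF_sub (s : G) (a : A) :
    ‖mulF ι α Φ E s a - a‖ ≤ ‖Φ (piRep ι α a * lam s) - piRep ι α a * lam s‖ := by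
  have h0 := AlgC_le _ _ (gen_mem ι α a s)
  have h1 : mulF ι α Φ E s a - a = E ((Φ (piRep ι α a * lam s) - piRep ι α a * lam s) * lam s⁻¹) := by
    rw [sub_mul, map_sub, mul_assoc, lam_mul_inv, mul_one, hE.pi hα hisom, mulF_apply]
  rw [h1]
  refine (hE.norm hα hisom (CrC_lam ι hα (sub_mem (hmap _ h0) h0) _)).trans ?_
  refine (norm_mul_le _ _).trans ?_
  exact mul_le_of_le_one_right (norm_nonneg _) (lam_norm_le _)

include hE hα hisom hmap hc hT in
theorem mulF_hs (h : CPB ι α Φ) : IsHerzSchurMultiplierCP ι α (mulF ι α Φ E) := by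
  have hg := mulS_gen hE hα hisom T hT
  have hcp := mulS_cp hE hα hmap T hT h
  refine ⟨mulS ι α Φ E T, hg, hcp.cp fun x _ => AlgC_le _ _ (mulS_mem T x), 1, zero_le_one, ?_⟩
  intro n M hM
  refine cb_of_cp hα hcp (C := T.card) ?_ zero_le_one ?_ hM
  · intro x hx
    rw [mulS_apply]
    refine (norm_sum_le_of_le T (f := fun s => piRep ι α (mulF ι α Φ E s (E (x * lam s⁻¹))) * lam s)
      (n := fun _ => ‖x‖) fun s _ => ?_).trans_eq (by simp)
    calc _ ≤ ‖piRep ι α (mulF ι α Φ E s (E (x * lam s⁻¹)))‖ * ‖lam (H := H) s‖ := norm_mul_le _ _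
      _ ≤ ‖piRep ι α (mulF ι α Φ E s (E (x * lam s⁻¹)))‖ :=
        mul_le_of_le_one_right (norm_nonneg _) (lam_norm_le _)
      _ ≤ _ := piRep_norm_le _ _ _
      _ ≤ _ := mulF_norm hE hα hisom hmap hc _ _
      _ ≤ _ := hE.norm hα hisom (CrC_lam ι hα hx _)
      _ ≤ ‖x‖ * ‖lam (H := H) s⁻¹‖ := norm_mul_le _ _
      _ ≤ ‖x‖ := mul_le_of_le_one_right (norm_nonneg _) (lam_norm_le _)
  · intro e _ he
    have := hg (e * e) 1
    rw [lam_one, mul_one, mul_one] at this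
    rw [this]
    refine (piRep_norm_le _ _ _).trans ((mulF_norm hE hα hisom hmap hc _ _).trans ?_)
    exact (norm_mul_le _ _).trans (mul_le_one₀ he (norm_nonneg _) he)

/-- `piRep` as a star homomorphism -/
def piHom (ι : A →⋆ₙₐ[ℂ] (H →L[ℂ] H)) (α : G → A ≃⋆ₐ[ℂ] A) :
    A →⋆ₙₐ[ℂ] (lp (fun _ : G => H) 2 →L[ℂ] lp (fun _ : G => H) 2) where
  toFun := piRep ι α
  map_smul' := piRep_smul ι α
  map_zero' := piRep_zero ι α
  map_add' := piRep_add ι α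
  map_mul' a b := (piRep_mul ι α a b).symm
  map_star' a := (piRep_star ι α a).symm

theorem matOp_ent_le {n : ℕ} (N : Matrix (Fin n) (Fin n)
      (lp (fun _ : G => H) 2 →L[ℂ] lp (fun _ : G => H) 2)) :
    ‖matOp (N.map fun x => ent x 1 1)‖ ≤ ‖matOp N‖ := by
  refine opNorm_le_of_inner (norm_nonneg _) fun x y => ?_
  let J : PiLp 2 (fun _ : Fin n => H) → PiLp 2 (fun _ : Fin n => lp (fun _ : G => H) 2) :=
    fun x => WithLp.toLp 2 fun i => lpSingle 1 (x i)
  have hJ : ∀ x, ‖J x‖ ≤ ‖x‖ := by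
    intro x
    refine (sq_le_sq₀ (norm_nonneg _) (norm_nonneg _)).1 ?_
    rw [pilp_norm_sq, pilp_norm_sq]
    refine Finset.sum_le_sum fun i _ => ?_
    have := lpSingle_norm (1 : G) (x i)
    gcongr
  have h1 : inner ℂ x (matOp (N.map fun x => ent x 1 1) y) = inner ℂ (J x) (matOp N (J y)) := by
    rw [inner_matOp, inner_matOp]
    refine Finset.sum_congr rfl fun p _ => Finset.sum_congr rfl fun q _ => ?_
    exact (lpSingle_inner _ _ _).symm
  rw [h1]
  calc _ ≤ ‖J x‖ * ‖matOp N (J y)‖ := norm_inner_le_norm _ _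
    _ ≤ ‖J x‖ * (‖matOp N‖ * ‖J y‖) := by gcongr; exact ContinuousLinearMap.le_opNorm _ _
    _ ≤ ‖x‖ * (‖matOp N‖ * ‖y‖) := by gcongr <;> exact hJ _
    _ = _ := by ring

include hE hα hisom hmap hc in
theorem mulF_cb (h : CPB ι α Φ) : CBBound (fun a => ι a) (fun a => ι a) (mulF ι α Φ E 1) 1 := by
  have hinj : Function.Injective ι := (AddMonoidHomClass.isometry_of_norm ι hisom).injective
  intro n M
  have h1 : M.map (fun a => ι (mulF ι α Φ E 1 a))
      = ((M.map (piHom ι α)).map Φ).map fun x => ent x 1 1 := by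
    ext1 i j
    simp only [Matrix.map_apply]
    have h0 := AlgC_le _ _ (gen_mem ι α (M i j) 1)
    rw [mulF_apply, hE.one hα (CrC_lam ι hα (hmap _ h0) _), inv_one, lam_one, mul_one, mul_one]
    rfl
  rw [h1]
  refine (matOp_ent_le _).trans ?_
  refine (cb_of_cp hα h (C := 1) (fun x hx => by rw [one_mul]; exact hc x hx) zero_le_one ?_
    (M := M.map (piHom ι α)) fun i j => AlgC_le _ _ (pi_mem ι α _)).trans ?_
  · intro e _ he
    refine (hc _ (AlgC_le _ _ (pi_mem ι α _))).trans ((piRep_norm_le _ _ _).trans ?_)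
    exact (norm_mul_le _ _).trans (mul_le_one₀ he (norm_nonneg _) he)
  · gcongr
    exact amp_norm_le ι (piHom ι α) hinj M

end P5
end

noncomputable section
open scoped ComplexOrder ENNReal
open Matrix
set_option linter.all false
set_option linter.deprecated false

section P6a
variable {K : Type*} [NormedAddCommGroup K] [InnerProductSpace ℂ K] [CompleteSpace K]
variable {ν : Type*} [Fintype ν]

theorem schur_sum (c : ν → ν → ℂ)
    (hc : ∀ z : ν → ℂ, 0 ≤ ∑ p, ∑ q, (starRingEnd ℂ) (z p) * (c p q * z q)) (ζ : ν → K) :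
    0 ≤ ∑ p, ∑ q, c p q * inner ℂ (ζ p) (ζ q) := by
  have h1 : PosQ (Matrix.of fun p q => (c p q) • (1 : ℂ →L[ℂ] ℂ)) := by
    intro z
    refine (hc z).trans_eq ?_
    refine Finset.sum_congr rfl fun p _ => Finset.sum_congr rfl fun q _ => ?_
    simp [mul_comm]
  obtain ⟨N, hN⟩ := h1.matPos
  have h2 : ∀ p q, c p q = ∑ k, (starRingEnd ℂ) (N k p 1) * N k q 1 := by
    intro p q
    have := congrArg (fun M : Matrix ν ν (ℂ →L[ℂ] ℂ) => inner ℂ (1 : ℂ) (M p q 1)) hN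
    simp only [Matrix.mul_apply, ContinuousLinearMap.sum_apply, inner_sum, Matrix.of_apply,
      ContinuousLinearMap.mul_apply, Matrix.conjTranspose_apply,
      ContinuousLinearMap.star_eq_adjoint, ContinuousLinearMap.adjoint_inner_right] at this
    simp at this
    rw [this]
    refine Finset.sum_congr rfl fun k _ => ?_
    ring
  have h3 : ∑ p, ∑ q, c p q * inner ℂ (ζ p) (ζ q)
      = ∑ k, inner ℂ (∑ p, N k p 1 • ζ p) (∑ q, N k q 1 • ζ q) := by
    simp only [h2, Finset.sum_mul]
    refine ((Finset.sum_congr rfl fun p _ => Finset.sum_comm).trans Finset.sum_comm).trans ?_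
    refine Finset.sum_congr rfl fun k _ => ?_
    rw [sum_inner]
    refine Finset.sum_congr rfl fun p _ => ?_
    rw [inner_sum]
    refine Finset.sum_congr rfl fun q _ => ?_
    rw [inner_smul_left, inner_smul_right]
    ring
  rw [h3]
  exact Finset.sum_nonneg fun k _ => cinner_self_nonneg _

theorem exists_dual_fam {V : Type*} [AddCommGroup V] [Module ℂ V] [FiniteDimensional ℂ V]
    {X : Type*} (φ : X → (V →ₗ[ℂ] ℂ)) (h : ∀ z : V, z ≠ 0 → ∃ x, φ x z ≠ 0) :
    ∃ (m : ℕ) (x : Fin m → X) (w : Fin m → V), ∀ v, v = ∑ j, φ (x j) v • w j := by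
  have hspan : Submodule.span ℂ (Set.range φ) = ⊤ := by
    apply Submodule.span_eq_top_of_ne_zero
    intro z hz
    obtain ⟨x, hx⟩ := h z hz
    exact ⟨_, ⟨x, rfl⟩, hx⟩
  obtain ⟨m, b', hb⟩ : ∃ (m : ℕ) (b' : Module.Basis (Fin m) ℂ (V →ₗ[ℂ] ℂ)), ∀ j, ∃ x, φ x = b' j := by
    let b := Module.Basis.ofSpan hspan.ge
    haveI : Fintype ((linearIndepOn_empty ℂ (id : (V →ₗ[ℂ] ℂ) → _)).extend (Set.empty_subset (Set.range φ))) :=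
      FiniteDimensional.fintypeBasisIndex b
    let e := Fintype.equivFin ((linearIndepOn_empty ℂ (id : (V →ₗ[ℂ] ℂ) → _)).extend (Set.empty_subset (Set.range φ)))
    refine ⟨_, b.reindex e, fun j => ?_⟩
    exact Module.Basis.ofSpan_subset hspan.ge (by simp [b])
  choose x hx using hb
  refine ⟨m, x, fun j => (Module.evalEquiv ℂ V).symm (b'.coord j), fun v => ?_⟩
  rw [← sub_eq_zero, ← Module.forall_dual_apply_eq_zero_iff ℂ]
  intro g
  have h1 : ∀ j, g ((Module.evalEquiv ℂ V).symm (b'.coord j)) = b'.coord j g := by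
    intro j
    exact Module.apply_evalEquiv_symm_apply ℂ V g (b'.coord j)
  rw [map_sub, map_sum]
  simp only [map_smul, h1, hx]
  have h2 := LinearMap.congr_fun (b'.sum_repr g) v
  rw [← h2, LinearMap.sum_apply, sub_eq_zero]
  refine Finset.sum_congr rfl fun j _ => ?_
  rw [LinearMap.smul_apply, smul_eq_mul, smul_eq_mul, mul_comm]
  rfl

theorem exists_states (V : Submodule ℂ (K →L[ℂ] K)) [FiniteDimensional ℂ V] :
    ∃ (m : ℕ) (ξ : Fin m → K) (w : Fin m → (K →L[ℂ] K)), (∀ j, w j ∈ V) ∧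
      ∀ v ∈ V, v = ∑ j, (inner ℂ (ξ j) (v (ξ j)) : ℂ) • w j := by
  let φ : K → (V →ₗ[ℂ] ℂ) := fun ξ =>
    { toFun := fun v => inner ℂ ξ ((v : K →L[ℂ] K) ξ)
      map_add' := fun v w => by simp [inner_add_right]
      map_smul' := fun c v => by simp [inner_smul_right] }
  obtain ⟨m, x, w, h⟩ := exists_dual_fam φ (by
    intro z hz
    by_contra! hcon
    apply hz
    have h1 : ((z : K →L[ℂ] K) : K →ₗ[ℂ] K) = 0 := by
      rw [← inner_map_self_eq_zero]
      intro x
      have h2 : inner ℂ x ((z : K →L[ℂ] K) x) = 0 := hcon x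
      exact inner_eq_zero_symm.1 h2
    ext x
    exact LinearMap.congr_fun h1 x)
  refine ⟨m, x, fun j => w j, fun j => (w j).2, fun v hv => ?_⟩
  have h3 := congrArg (fun x : V => (x : K →L[ℂ] K)) (h ⟨v, hv⟩)
  simp only [Submodule.coe_sum, Submodule.coe_smul] at h3
  exact h3
end P6a
end

noncomputable section
open scoped ComplexOrder ENNReal
open Matrix
set_option linter.all false
set_option linter.deprecated false

section P7a
variable {K : Type*} [NormedAddCommGroup K] [InnerProductSpace ℂ K] [CompleteSpace K]

theorem sa_add_pos {T : K →L[ℂ] K} (hT : star T = T) {ε : ℝ} (hn : ‖T‖ ≤ ε) (x : K) :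
    0 ≤ inner ℂ x ((T + (ε : ℂ) • 1) x) := by
  have hc : (starRingEnd ℂ) (inner ℂ x (T x)) = inner ℂ x (T x) := by
    rw [inner_conj_symm]
    conv_lhs => rw [← ContinuousLinearMap.adjoint_inner_right, ← ContinuousLinearMap.star_eq_adjoint, hT]
  obtain ⟨r, hr⟩ := Complex.conj_eq_iff_real.1 hc
  have h1 : ‖inner ℂ x (T x)‖ ≤ ε * ‖x‖ ^ 2 := by
    refine (norm_inner_le_norm _ _).trans ?_
    have := T.le_of_opNorm_le hn x
    nlinarith [norm_nonneg x]
  rw [hr, Complex.norm_real, Real.norm_eq_abs] at h1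
  have h2 : inner ℂ x ((T + (ε : ℂ) • 1) x) = ((r + ε * ‖x‖ ^ 2 : ℝ) : ℂ) := by
    simp [inner_add_right, hr, inner_smul_right, inner_self_eq_norm_sq_to_K]
  rw [h2]
  have := neg_le_of_abs_le h1
  exact_mod_cast (by linarith : 0 ≤ r + ε * ‖x‖ ^ 2)

/-- vector functional -/
def stL (Φ : (K →L[ℂ] K) →ₗ[ℂ] (K →L[ℂ] K)) (ξ : K) : (K →L[ℂ] K) →ₗ[ℂ] ℂ :=
  { toFun := fun x => inner ℂ ξ (Φ x ξ)
    map_add' := fun v w => by simp [inner_add_right]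
    map_smul' := fun c v => by simp [inner_smul_right] }

theorem stL_apply (Φ : (K →L[ℂ] K) →ₗ[ℂ] (K →L[ℂ] K)) (ξ : K) (x) :
    stL Φ ξ x = inner ℂ ξ (Φ x ξ) := rfl

theorem stL_norm (Φ : (K →L[ℂ] K) →ₗ[ℂ] (K →L[ℂ] K)) (ξ : K) (x) :
    ‖stL Φ ξ x‖ ≤ ‖ξ‖ ^ 2 * ‖Φ x‖ := by
  rw [stL_apply]
  refine (norm_inner_le_norm _ _).trans ?_
  have := (Φ x).le_opNorm ξ
  nlinarith [norm_nonneg ξ]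
end P7a

section P7b
open Filter Topology
variable {H : Type*} [NormedAddCommGroup H] [InnerProductSpace ℂ H] [CompleteSpace H]
variable {A : Type*} [NonUnitalCStarAlgebra A] {G : Type*} [Group G]
variable {ι : A →⋆ₙₐ[ℂ] (H →L[ℂ] H)} {α : G → A ≃⋆ₐ[ℂ] A}
variable {Φ : (lp (fun _ : G => H) 2 →L[ℂ] lp (fun _ : G => H) 2) →ₗ[ℂ]
         (lp (fun _ : G => H) 2 →L[ℂ] lp (fun _ : G => H) 2)}

theorem exists_decomp (hα : IsAction α) (hmap : ∀ x ∈ CrC ι α, Φ x ∈ CrC ι α)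
    (hc : ∀ x ∈ CrC ι α, ‖Φ x‖ ≤ ‖x‖) (h : CPB ι α Φ)
    (hfd : FiniteDimensional ℂ (Submodule.span ℂ ((fun x => Φ x) '' CrossedSet ι α))) :
    ∃ (m : ℕ) (ξ : Fin m → lp (fun _ : G => H) 2)
      (w : Fin m → (lp (fun _ : G => H) 2 →L[ℂ] lp (fun _ : G => H) 2)),
      (∀ j, w j ∈ CrC ι α) ∧ (∀ j, star (w j) = w j) ∧
      ∀ x ∈ CrC ι α, Φ x = ∑ j, stL Φ (ξ j) x • w j := by
  obtain ⟨m, ξ, w, hw, hs⟩ := exists_states (Submodule.span ℂ ((fun x => Φ x) '' CrossedSet ι α))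
  have hle : Submodule.span ℂ ((fun x => Φ x) '' CrossedSet ι α) ≤ CrC ι α := by
    rw [Submodule.span_le]
    rintro _ ⟨x, hx, rfl⟩
    exact hmap x hx
  have h1 : ∀ x ∈ CrC ι α, Φ x = ∑ j, stL Φ (ξ j) x • w j := fun x hx =>
    hs _ (Submodule.subset_span ⟨x, hx, rfl⟩)
  have h2 : ∀ x ∈ CrC ι α, Φ x = ∑ j, stL Φ (ξ j) x • star (w j) := by
    intro x hx
    have hh : ∀ x ∈ CrC ι α, ‖Φ x‖ ≤ 1 * ‖x‖ := by simpa using hc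
    have h3 := herm_of_cp hα h hh hx
    have h4 := h1 _ (CrC_star ι hα hx)
    have h5 := congrArg star h4
    rw [h3, star_star, star_sum] at h5
    rw [h5]
    refine Finset.sum_congr rfl fun j _ => ?_
    rw [star_smul, stL_apply, stL_apply, h3, ContinuousLinearMap.star_eq_adjoint,
      ContinuousLinearMap.adjoint_inner_right]
    congr 1
    exact inner_conj_symm _ _
  refine ⟨m, ξ, fun j => (2⁻¹ : ℂ) • (w j + star (w j)), fun j => ?_, fun j => ?_, fun x hx => ?_⟩
  · exact Submodule.smul_mem _ _ (add_mem (hle (hw j)) (CrC_star ι hα (hle (hw j))))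
  · rw [star_smul, star_add, star_star, add_comm]
    congr 1
    simp
  · have h6 : ∑ j, stL Φ (ξ j) x • ((2⁻¹ : ℂ) • (w j + star (w j)))
        = (2⁻¹ : ℂ) • (Φ x + Φ x) := by
      conv_rhs => enter [2, 1]; rw [h1 x hx]
      conv_rhs => enter [2, 2]; rw [h2 x hx]
      rw [← Finset.sum_add_distrib, Finset.smul_sum]
      refine Finset.sum_congr rfl fun j _ => ?_
      rw [smul_comm, smul_add]
    rw [h6, ← two_smul ℂ (Φ x), smul_smul]
    norm_num

/-- map with values in the span of `y` -/
def pertL {m : ℕ} (Φ : (lp (fun _ : G => H) 2 →L[ℂ] lp (fun _ : G => H) 2) →ₗ[ℂ]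
         (lp (fun _ : G => H) 2 →L[ℂ] lp (fun _ : G => H) 2)) (ξ : Fin m → lp (fun _ : G => H) 2)
      (y : Fin m → (lp (fun _ : G => H) 2 →L[ℂ] lp (fun _ : G => H) 2)) :
    (lp (fun _ : G => H) 2 →L[ℂ] lp (fun _ : G => H) 2) →ₗ[ℂ]
         (lp (fun _ : G => H) 2 →L[ℂ] lp (fun _ : G => H) 2) :=
  ∑ j, (stL Φ (ξ j)).smulRight (y j)

theorem pertL_apply {m : ℕ} (ξ : Fin m → lp (fun _ : G => H) 2) (y) (x) :
    pertL Φ ξ y x = ∑ j, stL Φ (ξ j) x • y j := by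
  simp [pertL, LinearMap.sum_apply]

theorem stL_pos (h : CPB ι α Φ) (ξ : lp (fun _ : G => H) 2) {n : ℕ} {M : Matrix (Fin n) (Fin n)
      (lp (fun _ : G => H) 2 →L[ℂ] lp (fun _ : G => H) 2)} (hM : ∀ i j, M i j ∈ CrC ι α)
    (hp : PosQ M) (z : Fin n → ℂ) :
    0 ≤ ∑ p, ∑ q, (starRingEnd ℂ) (z p) * (stL Φ ξ (M p q) * z q) := by
  refine (h n M hM hp (fun p => z p • ξ)).trans_eq ?_
  refine Finset.sum_congr rfl fun p _ => Finset.sum_congr rfl fun q _ => ?_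
  rw [map_smul, inner_smul_left, inner_smul_right, stL_apply, Matrix.map_apply]
  ring

theorem pert_cp (h : CPB ι α Φ) {m : ℕ} {ξ : Fin m → lp (fun _ : G => H) 2}
    {w d : Fin m → (lp (fun _ : G => H) 2 →L[ℂ] lp (fun _ : G => H) 2)}
    (hs : ∀ x ∈ CrC ι α, Φ x = ∑ j, stL Φ (ξ j) x • w j)
    (hd : ∀ j x, 0 ≤ inner ℂ x (d j x)) (P : lp (fun _ : G => H) 2 →L[ℂ] lp (fun _ : G => H) 2) :
    CPB ι α (pertL Φ ξ (fun j => star P * (w j + d j) * P)) := by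
  intro n M hM hp η
  choose S hS using fun j => exists_sqrt (hd j)
  have h1 := h n M hM hp (fun p => P (η p))
  have h2 : ∀ j, 0 ≤ ∑ p, ∑ q, stL Φ (ξ j) (M p q) * inner ℂ (S j (P (η p))) (S j (P (η q))) :=
    fun j => schur_sum _ (stL_pos h (ξ j) hM hp) _
  have h3 := add_nonneg h1 (Finset.sum_nonneg fun j (_ : j ∈ Finset.univ) => h2 j)
  have hsw : ∀ f : Fin m → Fin n → Fin n → ℂ, ∑ i, ∑ p, ∑ q, f i p q = ∑ p, ∑ q, ∑ i, f i p q :=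
    fun f => Finset.sum_comm.trans (Finset.sum_congr rfl fun p _ => Finset.sum_comm)
  rw [hsw] at h3
  refine h3.trans_eq ?_
  rw [← Finset.sum_add_distrib]
  refine Finset.sum_congr rfl fun p _ => ?_
  rw [← Finset.sum_add_distrib]
  refine Finset.sum_congr rfl fun q _ => ?_
  rw [Matrix.map_apply, Matrix.map_apply, pertL_apply, hs _ (hM p q)]
  simp only [ContinuousLinearMap.sum_apply, inner_sum, ← Finset.sum_add_distrib]
  refine Finset.sum_congr rfl fun j _ => ?_
  simp only [ContinuousLinearMap.smul_apply, inner_smul_right, ContinuousLinearMap.mul_apply,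
    ContinuousLinearMap.add_apply, hS, ContinuousLinearMap.star_eq_adjoint,
    ContinuousLinearMap.adjoint_inner_right, inner_add_right]
  ring

theorem CPB.smul (h : CPB ι α Φ) {c : ℝ} (hc : 0 ≤ c) : CPB ι α ((c : ℂ) • Φ) := by
  intro n M hM hp η
  have h1 := mul_nonneg (show (0 : ℂ) ≤ (c : ℂ) by exact_mod_cast hc) (h n M hM hp η)
  refine h1.trans_eq ?_
  rw [Finset.mul_sum]
  refine Finset.sum_congr rfl fun p _ => ?_
  rw [Finset.mul_sum]
  refine Finset.sum_congr rfl fun q _ => ?_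
  rw [Matrix.map_apply, Matrix.map_apply, LinearMap.smul_apply, ContinuousLinearMap.smul_apply,
    inner_smul_right]

theorem sa_approx (hα : IsAction α) {w} (hw : w ∈ CrC ι α) (hs : star w = w) {ε : ℝ} (hε : 0 < ε) :
    ∃ u ∈ AlgC ι α, star u = u ∧ ‖u - w‖ ≤ ε := by
  obtain ⟨u, hu, hl⟩ := CrC_seq ι α hw
  obtain ⟨n, hn⟩ := (((Metric.tendsto_nhds.1 hl) ε hε)).exists
  rw [dist_eq_norm] at hn
  refine ⟨(2⁻¹ : ℂ) • (u n + star (u n)), Submodule.smul_mem _ _ (add_mem (hu n)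
    (AlgC_star ι hα (hu n))), ?_, ?_⟩
  · rw [star_smul, star_add, star_star, add_comm]
    congr 1
    simp
  · have h1 : (2⁻¹ : ℂ) • (u n + star (u n)) - w = (2⁻¹ : ℂ) • ((u n - w) + star (u n - w)) := by
      rw [star_sub, hs]
      have : w = (2⁻¹ : ℂ) • (w + w) := by rw [← two_smul ℂ w, smul_smul]; norm_num
      conv_lhs => rw [this]
      rw [← smul_sub]
      congr 1
      abel
    rw [h1, norm_smul]
    have h2 := norm_add_le (u n - w) (star (u n - w))
    have h3 : ‖star (u n - w)‖ = ‖u n - w‖ := by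
      rw [ContinuousLinearMap.star_eq_adjoint]; exact LinearIsometryEquiv.norm_map _ _
    rw [h3] at h2
    have h4 : ‖(2⁻¹ : ℂ)‖ = 1 / 2 := by norm_num
    rw [h4]
    linarith

set_option maxHeartbeats 1000000 in
theorem perturb (hα : IsAction α) (hmap : ∀ x ∈ CrC ι α, Φ x ∈ CrC ι α)
    (hc : ∀ x ∈ CrC ι α, ‖Φ x‖ ≤ ‖x‖) (h : CPB ι α Φ)
    (hfd : FiniteDimensional ℂ (Submodule.span ℂ ((fun x => Φ x) '' CrossedSet ι α)))
    {δ : ℝ} (hδ : 0 < δ) :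
    ∃ (Ψ : (lp (fun _ : G => H) 2 →L[ℂ] lp (fun _ : G => H) 2) →ₗ[ℂ]
         (lp (fun _ : G => H) 2 →L[ℂ] lp (fun _ : G => H) 2)) (m : ℕ)
      (y : Fin m → (lp (fun _ : G => H) 2 →L[ℂ] lp (fun _ : G => H) 2)),
      CPB ι α Ψ ∧ (∀ x ∈ CrC ι α, ‖Ψ x‖ ≤ ‖x‖) ∧ (∀ j, y j ∈ AlgC ι α) ∧
      (∀ x, Ψ x ∈ Submodule.span ℂ (Set.range y)) ∧
      ∀ x ∈ CrC ι α, ‖Ψ x - Φ x‖ ≤ 2 * δ * ‖x‖ := by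
  obtain ⟨m, ξ, w, hw, hws, hs⟩ := exists_decomp hα hmap hc h hfd
  set R : ℝ := ∑ j, ‖ξ j‖ ^ 2 with hR
  have hR0 : 0 ≤ R := Finset.sum_nonneg fun j _ => by positivity
  obtain ⟨ε, hε, hεR⟩ : ∃ ε : ℝ, 0 < ε ∧ 3 * ε * R ≤ δ := by
    refine ⟨δ / (3 * (R + 1)), by positivity, ?_⟩
    have : 3 * (δ / (3 * (R + 1))) * R = δ * (R / (R + 1)) := by field_simp
    rw [this]
    have : R / (R + 1) ≤ 1 := by rw [div_le_one (by positivity)]; linarith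
    nlinarith
  choose u hu hus hun using fun j => sa_approx hα (hw j) (hws j) hε
  obtain ⟨e, ⟨hes, hen⟩, hel⟩ : ∃ e : A, (star e = e ∧ ‖e‖ ≤ 1) ∧
      ∀ j, ‖piRep ι α e * w j * piRep ι α e - w j‖ ≤ ε := by
    obtain ⟨l, hl, h1, h2⟩ := exists_approx ι hα
    have h3 : ∀ᶠ e in l, ∀ j, ‖piRep ι α e * w j * piRep ι α e - w j‖ ≤ ε := by
      rw [eventually_all]
      intro j
      filter_upwards [Metric.tendsto_nhds.1 (h2 _ (hw j)) ε hε] with e he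
      rw [dist_eq_norm] at he
      exact he.le
    exact (h1.and h3).exists
  set P := piRep ι α e with hP
  have hPs : star P = P := by rw [hP, piRep_star, hes]
  have hPn : ‖P‖ ≤ 1 := (piRep_norm_le ι α e).trans hen
  set d := fun j => (u j - w j) + (ε : ℂ) • (1 : lp (fun _ : G => H) 2 →L[ℂ] lp (fun _ : G => H) 2) with hd
  have hdp : ∀ j x, 0 ≤ inner ℂ x (d j x) := fun j x =>
    sa_add_pos (by rw [star_sub, hus, hws]) (hun j) x
  set y := fun j => star P * (w j + d j) * P with hy
  have hcp : CPB ι α (pertL Φ ξ y) := pert_cp h hs hdp P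
  have hPx : ∀ T : lp (fun _ : G => H) 2 →L[ℂ] lp (fun _ : G => H) 2, ‖P * T * P‖ ≤ ‖T‖ := by
    intro T
    refine (norm_mul_le _ _).trans ?_
    have h1 := norm_mul_le P T
    have h2 : ‖P‖ * ‖T‖ ≤ ‖T‖ := mul_le_of_le_one_left (norm_nonneg _) hPn
    have h3 : ‖P * T‖ * ‖P‖ ≤ ‖P * T‖ := mul_le_of_le_one_right (norm_nonneg _) hPn
    linarith
  have hye : ∀ j, y j = P * u j * P + (ε : ℂ) • (P * P) := by
    intro j
    simp only [hy, hd, hPs]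
    rw [show w j + (u j - w j + (ε : ℂ) • 1) = u j + (ε : ℂ) • 1 by abel]
    rw [mul_add, add_mul, mul_smul_comm, smul_mul_assoc, mul_one]
  have hyA : ∀ j, y j ∈ AlgC ι α := by
    intro j
    rw [hye]
    refine add_mem (AlgC_conj ι hα (hu j) e) (Submodule.smul_mem _ _ ?_)
    rw [hP, piRep_mul]
    exact pi_mem ι α _
  have hyw : ∀ j, ‖y j - w j‖ ≤ 3 * ε := by
    intro j
    have h1 : y j - w j = P * (u j - w j) * P + (P * w j * P - w j) + (ε : ℂ) • (P * P) := by
      rw [hye, mul_sub, sub_mul]; abel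
    rw [h1]
    have h2 := (hPx (u j - w j)).trans (hun j)
    have h3 : ‖(ε : ℂ) • (P * P)‖ ≤ ε := by
      rw [norm_smul, Complex.norm_real, Real.norm_eq_abs, abs_of_pos hε]
      have h4 := norm_mul_le P P
      have h5 : ‖P‖ * ‖P‖ ≤ 1 := mul_le_one₀ hPn (norm_nonneg _) hPn
      nlinarith
    have h6 := norm_add_le (P * (u j - w j) * P + (P * w j * P - w j)) ((ε : ℂ) • (P * P))
    have h7 := norm_add_le (P * (u j - w j) * P) (P * w j * P - w j)
    have h8 := hel j
    linarith
  have hdiff : ∀ x ∈ CrC ι α, ‖pertL Φ ξ y x - Φ x‖ ≤ δ * ‖x‖ := by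
    intro x hx
    rw [pertL_apply, hs x hx, ← Finset.sum_sub_distrib]
    have h1 : ∀ j ∈ Finset.univ, ‖stL Φ (ξ j) x • y j - stL Φ (ξ j) x • w j‖
        ≤ ‖ξ j‖ ^ 2 * (‖x‖ * (3 * ε)) := by
      intro j _
      rw [← smul_sub, norm_smul]
      have h2 := (stL_norm Φ (ξ j) x).trans (mul_le_mul_of_nonneg_left (hc x hx) (by positivity))
      calc _ ≤ (‖ξ j‖ ^ 2 * ‖x‖) * (3 * ε) := mul_le_mul h2 (hyw j) (norm_nonneg _) (by positivity)
        _ = _ := by ring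
    refine (norm_sum_le_of_le _ h1).trans ?_
    rw [← Finset.sum_mul, ← hR]
    nlinarith [norm_nonneg x]
  have hnorm : ∀ x ∈ CrC ι α, ‖pertL Φ ξ y x‖ ≤ (1 + δ) * ‖x‖ := by
    intro x hx
    have h1 := hdiff x hx
    have h2 := hc x hx
    have h3 : pertL Φ ξ y x = (pertL Φ ξ y x - Φ x) + Φ x := by abel
    rw [h3]
    have := norm_add_le (pertL Φ ξ y x - Φ x) (Φ x)
    linarith
  have hc0 : 0 < (1 + δ)⁻¹ := by positivity
  have hcd : (1 + δ)⁻¹ * (1 + δ) = 1 := inv_mul_cancel₀ (by positivity)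
  refine ⟨(((1 + δ)⁻¹ : ℝ) : ℂ) • pertL Φ ξ y, m, y, hcp.smul hc0.le, ?_, hyA, ?_, ?_⟩
  · intro x hx
    rw [LinearMap.smul_apply, norm_smul, Complex.norm_real, Real.norm_eq_abs, abs_of_pos hc0]
    have := mul_le_mul_of_nonneg_left (hnorm x hx) hc0.le
    rwa [← mul_assoc, hcd, one_mul] at this
  · intro x
    rw [LinearMap.smul_apply, pertL_apply]
    refine Submodule.smul_mem _ _ (Submodule.sum_mem _ fun j _ => Submodule.smul_mem _ _ ?_)
    exact Submodule.subset_span ⟨j, rfl⟩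
  · intro x hx
    rw [LinearMap.smul_apply]
    have h1 : (((1 + δ)⁻¹ : ℝ) : ℂ) • pertL Φ ξ y x - Φ x
        = ((((1 + δ)⁻¹ - 1 : ℝ)) : ℂ) • pertL Φ ξ y x + (pertL Φ ξ y x - Φ x) := by
      push_cast
      rw [sub_smul, one_smul]; abel
    have hle : (1 + δ)⁻¹ ≤ 1 := inv_le_one_of_one_le₀ (by linarith)
    rw [h1]
    refine (norm_add_le _ _).trans ?_
    rw [norm_smul, Complex.norm_real, Real.norm_eq_abs, abs_of_nonpos (by linarith)]
    have h2 := mul_le_mul_of_nonneg_left (hnorm x hx) (by linarith : 0 ≤ -((1 + δ)⁻¹ - 1))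
    have h3 : -((1 + δ)⁻¹ - 1) * ((1 + δ) * ‖x‖) = δ * ‖x‖ := by
      have : -((1 + δ)⁻¹ - 1) * ((1 + δ) * ‖x‖) = (-((1 + δ)⁻¹ * (1 + δ)) + (1 + δ)) * ‖x‖ := by ring
      rw [this, hcd]; ring
    have h4 := hdiff x hx
    linarith
end P7b
end

noncomputable section
open scoped ComplexOrder ENNReal
open Matrix
set_option linter.all false
set_option linter.deprecated false

section P8
open Filter Topology
variable {H : Type*} [NormedAddCommGroup H] [InnerProductSpace ℂ H] [CompleteSpace H]
variable {A : Type*} [NonUnitalCStarAlgebra A] {G : Type*} [Group G]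
variable {ι : A →⋆ₙₐ[ℂ] (H →L[ℂ] H)} {α : G → A ≃⋆ₐ[ℂ] A}
variable {Φ : (lp (fun _ : G => H) 2 →L[ℂ] lp (fun _ : G => H) 2) →ₗ[ℂ]
         (lp (fun _ : G => H) 2 →L[ℂ] lp (fun _ : G => H) 2)}
variable {E : (lp (fun _ : G => H) 2 →L[ℂ] lp (fun _ : G => H) 2) →ₗ[ℂ] A}

theorem alg_supp (hE : CE ι α E) (hα : IsAction α) (hisom : ∀ a : A, ‖ι a‖ = ‖a‖)
    {y} (hy : y ∈ AlgC ι α) : ∃ T : Finset G, ∀ s ∉ T, E (y * lam s⁻¹) = 0 := by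
  classical
  refine Submodule.span_induction (p := fun y _ => ∃ T : Finset G, ∀ s ∉ T, E (y * lam s⁻¹) = 0)
    ?_ ?_ ?_ ?_ hy
  · rintro _ ⟨a, t, rfl⟩
    refine ⟨{t}, fun s hs => ?_⟩
    rw [mul_assoc, lam_mul]
    refine hE.gen hα hisom a ?_
    intro h
    apply hs
    rw [Finset.mem_singleton]
    exact (mul_inv_eq_one.1 h).symm
  · exact ⟨∅, fun s _ => by rw [zero_mul, map_zero]⟩
  · rintro x y _ _ ⟨T, hT⟩ ⟨U, hU⟩
    refine ⟨T ∪ U, fun s hs => ?_⟩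
    rw [Finset.notMem_union] at hs
    rw [add_mul, map_add, hT s hs.1, hU s hs.2, add_zero]
  · rintro c x _ ⟨T, hT⟩
    refine ⟨T, fun s hs => ?_⟩
    rw [smul_mul_assoc, map_smul, hT s hs, smul_zero]

theorem fam_supp (hE : CE ι α E) (hα : IsAction α) (hisom : ∀ a : A, ‖ι a‖ = ‖a‖) {m : ℕ}
    {y : Fin m → (lp (fun _ : G => H) 2 →L[ℂ] lp (fun _ : G => H) 2)} (hy : ∀ j, y j ∈ AlgC ι α) :
    ∃ T : Finset G, ∀ s ∉ T, ∀ z ∈ Submodule.span ℂ (Set.range y), E (z * lam s⁻¹) = 0 := by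
  classical
  choose T hT using fun j => alg_supp hE hα hisom (hy j)
  refine ⟨Finset.univ.biUnion T, fun s hs z hz => ?_⟩
  have : Submodule.span ℂ (Set.range y) ≤
      LinearMap.ker (E ∘ₗ LinearMap.mulRight ℂ (lam s⁻¹ : lp (fun _ : G => H) 2 →L[ℂ] lp (fun _ : G => H) 2)) := by
    rw [Submodule.span_le]
    rintro _ ⟨j, rfl⟩
    refine hT j s fun h => hs ?_
    exact Finset.mem_biUnion.2 ⟨j, Finset.mem_univ _, h⟩
  exact this hz

theorem mulF_fd {m : ℕ} {y : Fin m → (lp (fun _ : G => H) 2 →L[ℂ] lp (fun _ : G => H) 2)}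
    (h : ∀ x, Φ x ∈ Submodule.span ℂ (Set.range y)) (s : G) :
    FiniteDimensional ℂ (LinearMap.range (mulF ι α Φ E s)) := by
  haveI : FiniteDimensional ℂ (Submodule.span ℂ (Set.range y)) :=
    FiniteDimensional.span_of_finite ℂ (Set.finite_range y)
  have hle : LinearMap.range (mulF ι α Φ E s) ≤ (Submodule.span ℂ (Set.range y)).map
      (E ∘ₗ LinearMap.mulRight ℂ (lam s⁻¹ : lp (fun _ : G => H) 2 →L[ℂ] lp (fun _ : G => H) 2)) := by
    rintro _ ⟨a, rfl⟩
    exact ⟨_, h _, rfl⟩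
  exact Submodule.finiteDimensional_of_le hle

theorem dyn_of_crossed (hisom : ∀ a : A, ‖ι a‖ = ‖a‖) (hα : IsAction α)
    (h : CrossedNuclear ι α) : DynNuclear ι α := by
  obtain ⟨I, hI, hS, Φ, hcp, hc, hfd, hlim⟩ := h
  obtain ⟨E, hE⟩ := exists_CE ι α hisom hα
  have key : ∀ p : I × ℕ, _ := fun p =>
    perturb hα (hcp p.1).1 (hc p.1) (hcp p.1).cpb (hfd p.1)
      (δ := 1 / ((p.2 : ℝ) + 1)) Nat.one_div_pos_of_nat
  choose Ψ m y hΨcp hΨc hy hΨy hΨd using key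
  have hmap : ∀ p, ∀ x ∈ CrC ι α, Ψ p x ∈ CrC ι α := by
    intro p x _
    refine AlgC_le ι α ((Submodule.span_le.2 ?_) (hΨy p x))
    rintro _ ⟨j, rfl⟩
    exact hy p j
  choose T hT using fun p => fam_supp hE hα hisom (hy p)
  have hT' : ∀ p, ∀ s ∉ T p, mulF ι α (Ψ p) E s = 0 := by
    intro p s hs
    ext a
    rw [mulF_apply]
    exact hT p s hs _ (hΨy p _)
  refine ⟨I × ℕ, inferInstance, inferInstance, fun p => mulF ι α (Ψ p) E, ?_, ?_, ?_, ?_, ?_⟩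
  · intro p
    exact mulF_hs hE hα hisom (hmap p) (T p) (hT' p) (hΨc p) (hΨcp p)
  · intro p
    refine (T p).finite_toSet.subset fun s hs => ?_
    by_contra hcon
    exact hs (hT' p s hcon)
  · intro p
    exact mulF_cb hE hα hisom (hmap p) (hΨc p) (hΨcp p)
  · intro p s
    exact mulF_fd (hΨy p) s
  · intro s a
    set x := piRep ι α a * lam (H := H) s with hx
    have hxC : x ∈ CrC ι α := AlgC_le ι α (gen_mem ι α a s)
    have h1 : ∀ p, ‖mulF ι α (Ψ p) E s a - a‖ ≤ 2 * (1 / ((p.2 : ℝ) + 1)) * ‖x‖ + ‖Φ p.1 x - x‖ := by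
      intro p
      refine (mulF_sub hE hα hisom (hmap p) s a).trans ?_
      have h2 : Ψ p x - x = (Ψ p x - Φ p.1 x) + (Φ p.1 x - x) := by abel
      rw [← hx, h2]
      exact (norm_add_le _ _).trans (add_le_add_left (hΨd p x hxC) _)
    refine squeeze_zero (fun p => norm_nonneg _) h1 ?_
    rw [← prod_atTop_atTop_eq]
    have h3 : Tendsto (fun p : I × ℕ => 2 * (1 / ((p.2 : ℝ) + 1)) * ‖x‖) (atTop ×ˢ atTop) (𝓝 (2 * 0 * ‖x‖)) :=
      ((tendsto_one_div_add_atTop_nhds_zero_nat.comp tendsto_snd).const_mul 2).mul_const _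
    have h4 := (hlim x hxC).comp (tendsto_fst (f := (atTop : Filter I)) (g := (atTop : Filter ℕ)))
    simpa using h3.add h4
end P8
end

noncomputable section
open scoped ComplexOrder ENNReal
open Matrix
set_option linter.all false
set_option linter.deprecated false

section P9
open Filter Topology
variable {H : Type*} [NormedAddCommGroup H] [InnerProductSpace ℂ H] [CompleteSpace H]
variable {A : Type*} [NonUnitalCStarAlgebra A] {G : Type*} [Group G]
variable {ι : A →⋆ₙₐ[ℂ] (H →L[ℂ] H)} {α : G → A ≃⋆ₐ[ℂ] A}
variable {Φ : (lp (fun _ : G => H) 2 →L[ℂ] lp (fun _ : G => H) 2) →ₗ[ℂ]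
         (lp (fun _ : G => H) 2 →L[ℂ] lp (fun _ : G => H) 2)}
variable {F : G → (A →ₗ[ℂ] A)}

theorem hs_contr (hisom : ∀ a : A, ‖ι a‖ = ‖a‖) (hα : IsAction α) (hg : HSGenProp ι α F Φ)
    (hcp : CPB ι α Φ) {C : ℝ} (hC : CBBoundOnCrossed ι α Φ C)
    (hcb : CBBound (fun a => ι a) (fun a => ι a) (F 1) 1) :
    ∀ x ∈ CrC ι α, ‖Φ x‖ ≤ ‖x‖ := by
  have h1 : ∀ x ∈ CrC ι α, ‖Φ x‖ ≤ C * ‖x‖ := by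
    intro x hx
    have := hC 1 (Matrix.of fun _ _ => x) (fun _ _ => hx)
    rwa [matOp_one_norm_le (Φ x) _ rfl, matOp_one_norm_le x _ rfl] at this
  have h2 : ∀ a, ‖F 1 a‖ ≤ ‖a‖ := by
    intro a
    have := hcb 1 (Matrix.of fun _ _ => a)
    rwa [matOp_one_norm_le (ι (F 1 a)) _ rfl, matOp_one_norm_le (ι a) _ rfl, hisom, hisom,
      one_mul] at this
  intro x hx
  have h3 := cb_of_cp hα hcp h1 zero_le_one (fun e he hn => by
    have h4 := hg (e * e) 1
    rw [lam_one, mul_one, mul_one] at h4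
    rw [h4]
    refine (piRep_norm_le ι α _).trans ((h2 _).trans ((norm_mul_le _ _).trans ?_))
    exact mul_le_one₀ hn (norm_nonneg _) hn) (M := (Matrix.of fun (_ _ : Fin 1) => x)) (fun _ _ => hx)
  rwa [matOp_one_norm_le (Φ x) _ rfl, matOp_one_norm_le x _ rfl, one_mul] at h3

theorem hs_fd (hg : HSGenProp ι α F Φ) (hc : ∀ x ∈ CrC ι α, ‖Φ x‖ ≤ ‖x‖)
    (hsupp : (Function.support F).Finite)
    (hfd : ∀ s, FiniteDimensional ℂ (LinearMap.range (F s))) :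
    FiniteDimensional ℂ (Submodule.span ℂ ((fun x => Φ x) '' CrossedSet ι α)) := by
  classical
  let L : G → (A →ₗ[ℂ] (lp (fun _ : G => H) 2 →L[ℂ] lp (fun _ : G => H) 2)) := fun s =>
    LinearMap.mulRight ℂ (lam (H := H) s) ∘ₗ piRepLin ι α
  let W : Submodule ℂ (lp (fun _ : G => H) 2 →L[ℂ] lp (fun _ : G => H) 2) :=
    hsupp.toFinset.sup fun s => (LinearMap.range (F s)).map (L s)
  haveI : FiniteDimensional ℂ W := Submodule.finiteDimensional_finset_sup _ _
  have h1 : ∀ x ∈ AlgC ι α, Φ x ∈ W := by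
    intro x hx
    have : AlgC ι α ≤ W.comap Φ := by
      refine Submodule.span_le.2 ?_
      rintro _ ⟨a, s, rfl⟩
      change Φ _ ∈ W
      rw [hg a s]
      by_cases hs : s ∈ Function.support F
      · have h2 : (LinearMap.range (F s)).map (L s) ≤ W :=
          Finset.le_sup (f := fun s => (LinearMap.range (F s)).map (L s)) (hsupp.mem_toFinset.2 hs)
        exact h2 ⟨F s a, ⟨a, rfl⟩, rfl⟩
      · rw [Function.notMem_support.1 hs, LinearMap.zero_apply, piRep_zero, zero_mul]
        exact zero_mem _
    exact this hx
  have hcl : IsClosed (W : Set (lp (fun _ : G => H) 2 →L[ℂ] lp (fun _ : G => H) 2)) :=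
    Submodule.closed_of_finiteDimensional W
  have hle : Submodule.span ℂ ((fun x => Φ x) '' CrossedSet ι α) ≤ W := by
    rw [Submodule.span_le]
    rintro _ ⟨x, hx, rfl⟩
    obtain ⟨u, hu, hl⟩ := CrC_seq ι α hx
    have h3 := tendsto_phi (C := 1) (by simpa using hc) hx (fun n => AlgC_le ι α (hu n)) hl
    exact hcl.mem_of_tendsto h3 (Eventually.of_forall fun n => h1 _ (hu n))
  exact Submodule.finiteDimensional_of_le hle

theorem crossed_of_dyn (hisom : ∀ a : A, ‖ι a‖ = ‖a‖) (hα : IsAction α)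
    (h : DynNuclear ι α) : CrossedNuclear ι α := by
  obtain ⟨I, hI, hS, F, hhs, hsupp, hcb, hfd, hlim⟩ := h
  choose Φ hg hcp C hC0 hC using hhs
  have hc : ∀ i, ∀ x ∈ CrC ι α, ‖Φ i x‖ ≤ ‖x‖ := fun i =>
    hs_contr hisom hα (hg i) (hcp i).cpb (hC i) (hcb i)
  refine ⟨I, hI, hS, Φ, hcp, hc, fun i => hs_fd (hg i) (hc i) (hsupp i) (hfd i), ?_⟩
  have h1 : ∀ x ∈ AlgC ι α, Tendsto (fun i => Φ i x - x) atTop (𝓝 0) := by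
    intro x hx
    refine Submodule.span_induction (p := fun x _ => Tendsto (fun i => Φ i x - x) atTop (𝓝 0))
      ?_ ?_ ?_ ?_ hx
    · rintro _ ⟨a, s, rfl⟩
      refine squeeze_zero_norm (fun i => ?_) (hlim s a)
      rw [hg i a s, ← sub_mul, ← piRep_sub]
      refine (norm_mul_le _ _).trans ?_
      exact (mul_le_of_le_one_right (norm_nonneg _) (lam_norm_le s)).trans (piRep_norm_le ι α _)
    · simp
    · intro x y _ _ hx hy
      have := hx.add hy
      rw [add_zero] at this
      refine this.congr fun i => ?_
      rw [map_add]; abel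
    · intro c x _ hx
      have := hx.const_smul c
      rw [smul_zero] at this
      refine this.congr fun i => ?_
      rw [map_smul, smul_sub]
  intro x hx
  rw [Metric.tendsto_nhds]
  intro ε hε
  obtain ⟨u, hu, hl⟩ := CrC_seq ι α hx
  obtain ⟨n, hn⟩ := (((Metric.tendsto_nhds.1 hl) (ε / 3) (by positivity))).exists
  rw [dist_eq_norm] at hn
  filter_upwards [Metric.tendsto_nhds.1 (h1 _ (hu n)) (ε / 3) (by positivity)] with i hi
  rw [dist_zero_right] at hi ⊢
  rw [norm_norm]
  have h2 : Φ i x - x = (Φ i (u n) - u n) - Φ i (u n - x) + (u n - x) := by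
    rw [map_sub]; abel
  have h3 := hc i _ (sub_mem (AlgC_le ι α (hu n)) hx)
  have h4 := norm_add_le ((Φ i (u n) - u n) - Φ i (u n - x)) (u n - x)
  have h5 := norm_sub_le (Φ i (u n) - u n) (Φ i (u n - x))
  rw [h2]
  linarith
end P9
end


noncomputable section
open scoped ComplexOrder ENNReal
open Matrix

/-- **Theorem 4.4.** Let `G` be a discrete group and `(A,G,α)` a C*-dynamical system.
Then `(A,G,α)` is nuclear if and only if the reduced crossed product `A ⋊_{α,r} G` is
a nuclear C*-algebra. -/
theorem dynNuclear_iff_crossedNuclear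
    {H : Type*} [NormedAddCommGroup H] [InnerProductSpace ℂ H] [CompleteSpace H]
    {A : Type*} [NonUnitalCStarAlgebra A] {G : Type*} [Group G]
    (ι : A →⋆ₙₐ[ℂ] (H →L[ℂ] H)) (hisom : ∀ a : A, ‖ι a‖ = ‖a‖)
    (hnd : NondegenerateRep ι)
    (α : G → A ≃⋆ₐ[ℂ] A) (hα : IsAction α) :
    DynNuclear ι α ↔ CrossedNuclear ι α := by
  exact ⟨crossed_of_dyn hisom hα, dyn_of_crossed hisom hα⟩

end
end
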